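/- arXiv:2009.14077 — 3 statements merged into one kernel-verified Lean document; each statement's English description precedes it below -/
import Mathlib

section
/- For each integer k ≥ 1 and crossing parameter η = π/3, the elliptic Tsuchiya determinant ℍ_{2k}(x₁,…,x_k; x_{k+1},…,x_{2k}) is a symmetric function of all 2k variables: for every permutation σ of {1,…,2k} one has ℍ_{2k}(x_{σ(1)},…,x_{σ(k)}; x_{σ(k+1)},…,x_{σ(2k)}) = ℍ_{2k}(x₁,…,x_k; x_{k+1},…,x_{2k}) at every point of ℂ^{2k} where both sides are defined (i.e. where the Vandermonde-type denominators and the entries 𝕙(x_i,x_{j+k}) are nonzero). -/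
noncomputable section

open Complex
open scoped BigOperators

/-- Jacobi theta function `ϑ₁(z|τ)` with nome `p = e^{iπτ}` (Whittaker–Watson convention). -/
def th1 (z τ : ℂ) : ℂ :=
  -Complex.I * ∑' n : ℤ, (-1 : ℂ) ^ n *
    Complex.exp ((Real.pi : ℂ) * Complex.I * τ * ((n : ℂ) + 1/2) ^ 2 + (2 * (n : ℂ) + 1) * Complex.I * z)

/-- Jacobi theta function `ϑ₂(z|τ)`. -/
def th2 (z τ : ℂ) : ℂ :=
  ∑' n : ℤ,
    Complex.exp ((Real.pi : ℂ) * Complex.I * τ * ((n : ℂ) + 1/2) ^ 2 + (2 * (n : ℂ) + 1) * Complex.I * z)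

/-- Jacobi theta function `ϑ₃(z|τ)`. -/
def th3 (z τ : ℂ) : ℂ :=
  ∑' n : ℤ, Complex.exp ((Real.pi : ℂ) * Complex.I * τ * (n : ℂ) ^ 2 + 2 * (n : ℂ) * Complex.I * z)

/-- Jacobi theta function `ϑ₄(z|τ)`. -/
def th4 (z τ : ℂ) : ℂ :=
  ∑' n : ℤ, (-1 : ℂ) ^ n *
    Complex.exp ((Real.pi : ℂ) * Complex.I * τ * (n : ℂ) ^ 2 + 2 * (n : ℂ) * Complex.I * z)

/-- The crossing parameter `η = π/3`. -/
def ηc : ℂ := (Real.pi : ℂ) / 3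

/-- The elliptic nome `p = e^{iπτ}`. -/
def pnome (τ : ℂ) : ℂ := Complex.exp ((Real.pi : ℂ) * Complex.I * τ)

/-- `ζ = (ϑ₁(η,p²)/ϑ₄(η,p²))²`. -/
def zet (τ : ℂ) : ℂ := (th1 ηc (2 * τ) / th4 ηc (2 * τ)) ^ 2

/-- The nome `p` is real with `0 < p < 1`. -/
def preal (τ : ℂ) : Prop := (pnome τ).im = 0 ∧ 0 < (pnome τ).re ∧ (pnome τ).re < 1

/-- A tuple given by a list of prescribed entries, padded by zeros. -/
def padded {n : ℕ} (l : List ℂ) : Fin n → ℂ := fun j => l.getD (j : ℕ) 0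

/-- Extension of a tuple by a list of prescribed further entries (padded by zeros). -/
def extL {m n : ℕ} (w : Fin m → ℂ) (l : List ℂ) : Fin n → ℂ :=
  fun j => if h : (j : ℕ) < m then w ⟨j, h⟩ else l.getD ((j : ℕ) - m) 0

/-- First `k` entries of a `2k`-tuple. -/
def firstHalf {k : ℕ} (x : Fin (2 * k) → ℂ) : Fin k → ℂ :=
  fun i => x ⟨(i : ℕ), by have := i.2; omega⟩

/-- Last `k` entries of a `2k`-tuple. -/
def secondHalf {k : ℕ} (x : Fin (2 * k) → ℂ) : Fin k → ℂ :=
  fun i => x ⟨k + (i : ℕ), by have := i.2; omega⟩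

/-- `𝕙(x,y) = ϑ₁(x−y+η)ϑ₁(x−y−η)ϑ₁(x+y+η)ϑ₁(x+y−η)`. -/
def hh (τ x y : ℂ) : ℂ :=
  th1 (x - y + ηc) τ * th1 (x - y - ηc) τ * th1 (x + y + ηc) τ * th1 (x + y - ηc) τ

/-- `𝔻(x₁,…,x_k) = ∏_{i<j} ϑ₁(x_j−x_i)ϑ₁(x_j+x_i)`. -/
def vdTheta (τ : ℂ) {k : ℕ} (y : Fin k → ℂ) : ℂ :=
  ∏ i : Fin k, ∏ j : Fin k, if i < j then th1 (y j - y i) τ * th1 (y j + y i) τ else 1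

/-- The elliptic Tsuchiya determinant `ℍ_{2k}(x₁,…,x_k; x_{k+1},…,x_{2k})`. -/
def tsuchiya (τ : ℂ) (k : ℕ) (x : Fin (2 * k) → ℂ) : ℂ :=
  (∏ i : Fin k, ∏ j : Fin k, hh τ (firstHalf x i) (secondHalf x j))
    / (vdTheta τ (firstHalf x) * vdTheta τ (secondHalf x))
    * Matrix.det (Matrix.of fun i j : Fin k => (hh τ (firstHalf x i) (secondHalf x j))⁻¹)

/-- The expression defining the elliptic Tsuchiya determinant is well defined:
the Vandermonde-type denominators and the entries `𝕙(x_i,x_{j+k})` are nonzero. -/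
def tsuDefined (τ : ℂ) (k : ℕ) (x : Fin (2 * k) → ℂ) : Prop :=
  (∀ i j : Fin k, i ≠ j →
    th1 (firstHalf x j - firstHalf x i) τ ≠ 0 ∧ th1 (firstHalf x j + firstHalf x i) τ ≠ 0) ∧
  (∀ i j : Fin k, i ≠ j →
    th1 (secondHalf x j - secondHalf x i) τ ≠ 0 ∧ th1 (secondHalf x j + secondHalf x i) τ ≠ 0) ∧
  (∀ i j : Fin k, hh τ (firstHalf x i) (secondHalf x j) ≠ 0)

/-- `h(w,w') = 1 − (3+ζ²)ww' + (1−ζ²)ww'(w+w')`. -/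
def hpol (ζ w w' : ℂ) : ℂ := 1 - (3 + ζ ^ 2) * w * w' + (1 - ζ ^ 2) * w * w' * (w + w')

/-- Vandermonde product `Δ(w₁,…,w_k) = ∏_{i<j}(w_j − w_i)`. -/
def vdm {k : ℕ} (y : Fin k → ℂ) : ℂ :=
  ∏ i : Fin k, ∏ j : Fin k, if i < j then y j - y i else 1

/-- The determinant-ratio expression defining the polynomial `H_{2k}`. -/
def Hratio (ζ : ℂ) (k : ℕ) (w : Fin (2 * k) → ℂ) : ℂ :=
  (∏ i : Fin k, ∏ j : Fin k, hpol ζ (firstHalf w i) (secondHalf w j))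
    / (vdm (firstHalf w) * vdm (secondHalf w))
    * Matrix.det (Matrix.of fun i j : Fin k => (hpol ζ (firstHalf w i) (secondHalf w j))⁻¹)

/-- The expression `Hratio` is well defined at `w`. -/
def HratioDefined (ζ : ℂ) (k : ℕ) (w : Fin (2 * k) → ℂ) : Prop :=
  (∀ i j : Fin k, i ≠ j → firstHalf w i ≠ firstHalf w j) ∧
  (∀ i j : Fin k, i ≠ j → secondHalf w i ≠ secondHalf w j) ∧
  (∀ i j : Fin k, hpol ζ (firstHalf w i) (secondHalf w j) ≠ 0)

/-- `H` is the family of Rosengren–Zinn-Justin polynomials `H_{2k}` for parameter `ζ`: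
for each `k`, `H k` is a polynomial function of the `2k` variables agreeing with the
determinant-ratio formula wherever the latter is defined, and `H 0 = 1`. -/
def IsHFamily (ζ : ℂ) (H : (k : ℕ) → (Fin (2 * k) → ℂ) → ℂ) : Prop :=
  (∀ w, H 0 w = 1) ∧
  (∀ k : ℕ, ∃ P : MvPolynomial (Fin (2 * k)) ℂ, ∀ w, H k w = MvPolynomial.eval w P) ∧
  (∀ (k : ℕ) (w : Fin (2 * k) → ℂ), HratioDefined ζ k w → H k w = Hratio ζ k w)

/-- Vertex weight `a(u)`. -/
def av (τ u : ℂ) : ℂ := th4 (2*ηc) (2*τ) * th1 (u + 2*ηc) (2*τ) * th4 u (2*τ)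
/-- Vertex weight `b(u)`. -/
def bv (τ u : ℂ) : ℂ := th4 (2*ηc) (2*τ) * th4 (u + 2*ηc) (2*τ) * th1 u (2*τ)
/-- Vertex weight `c(u)`. -/
def cv (τ u : ℂ) : ℂ := th1 (2*ηc) (2*τ) * th4 (u + 2*ηc) (2*τ) * th4 u (2*τ)
/-- Vertex weight `d(u)`. -/
def dv (τ u : ℂ) : ℂ := th1 (2*ηc) (2*τ) * th1 (u + 2*ηc) (2*τ) * th1 u (2*τ)
/-- `r(u) = a(u) + b(u)`. -/
def rv (τ u : ℂ) : ℂ := av τ u + bv τ u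

/-- Entries of the `R`-matrix of the eight-vertex model, in the basis `{↑↑,↑↓,↓↑,↓↓}`
identified with `Fin 2 × Fin 2` (`↑ = 0`, `↓ = 1`). -/
def Rent (τ u : ℂ) (p q : Fin 2 × Fin 2) : ℂ :=
  if p = q then (if p.1 = p.2 then av τ u else bv τ u)
  else if q = (p.2, p.1) then cv τ u
  else if p.1 = p.2 ∧ q.1 = q.2 then dv τ u
  else 0

/-- Entries of `Ř(u) = 𝒫 R(u)`. -/
def Rcheckent (τ u : ℂ) (p q : Fin 2 × Fin 2) : ℂ := Rent τ u (p.2, p.1) q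

/-- The boundary vector `χ(x) ∈ ℂ²⊗ℂ²`. -/
def chiV (τ lam x : ℂ) : Fin 2 × Fin 2 → ℂ := fun p =>
  if p = ((0 : Fin 2), (1 : Fin 2)) then th1 (x + lam) (2*τ) * th4 (x - lam - 2*ηc) (2*τ)
  else if p = ((1 : Fin 2), (0 : Fin 2)) then th1 (x - lam - 2*ηc) (2*τ) * th4 (x + lam) (2*τ)
  else 0

/-- The boundary vector `χ̄(x) ∈ ℂ²⊗ℂ²`. -/
def chibarV (τ lam x : ℂ) : Fin 2 × Fin 2 → ℂ := fun p =>
  if p = ((0 : Fin 2), (0 : Fin 2)) then th1 (x + lam) (2*τ) * th1 (x - lam - 2*ηc) (2*τ)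
  else if p = ((1 : Fin 2), (1 : Fin 2)) then th4 (x - lam - 2*ηc) (2*τ) * th4 (x + lam) (2*τ)
  else 0

/-- A family `Ψ_n(u₁,…,u_{2n+1}) ∈ (ℂ²)^{⊗(2n+1)}`, represented by its components
with respect to spin configurations `α : Fin (2n+1) → Fin 2` (`↑ = 0`, `↓ = 1`). -/
abbrev PsiFam := (n : ℕ) → (Fin (2 * n + 1) → ℂ) → (Fin (2 * n + 1) → Fin 2) → ℂ

/-- The action of `Ř(u)` on tensor factors `i`, `j` of `(ℂ²)^{⊗L}`. -/
def applyRc (τ u : ℂ) {L : ℕ} (i j : Fin L) (ψ : (Fin L → Fin 2) → ℂ) :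
    (Fin L → Fin 2) → ℂ := fun α =>
  ∑ s : Fin 2, ∑ t : Fin 2,
    Rcheckent τ u (α i, α j) (s, t) * ψ (Function.update (Function.update α i s) j t)

/-- Spin flip. -/
def flipS : Fin 2 → Fin 2 := fun s => if s = 0 then 1 else 0

/-- Components of the singlet `s = ↑↓ − ↓↑`. -/
def singletC : Fin 2 → Fin 2 → ℂ := fun s t =>
  if s = 0 ∧ t = 1 then 1 else if s = 1 ∧ t = 0 then -1 else 0

/-- Delete the entries at positions `i`, `i+1` from a tuple. -/
def delTwo {α : Type*} {n : ℕ} (i : ℕ) (u : Fin (2 * (n + 1) + 1) → α) : Fin (2 * n + 1) → α :=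
  fun j => if _h : (j : ℕ) < i then u ⟨j, by have := j.2; omega⟩
           else u ⟨(j : ℕ) + 2, by have := j.2; omega⟩

/-- The components of `Ψ_n` are entire functions of each `u_i`. -/
def PsiEntire (Ψ : PsiFam) : Prop :=
  ∀ (n : ℕ) (u : Fin (2*n+1) → ℂ) (i : Fin (2*n+1)) (α : Fin (2*n+1) → Fin 2),
    Differentiable ℂ fun z => Ψ n (Function.update u i z) α

/-- (P1): the exchange relations. -/
def PsiP1 (τ : ℂ) (Ψ : PsiFam) : Prop :=
  ∀ (n : ℕ) (u : Fin (2*n+1) → ℂ) (i j : Fin (2*n+1)), (j : ℕ) = (i : ℕ) + 1 →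
    applyRc τ (u j - u i) i j (Ψ n u)
      = fun α => rv τ (u j - u i) * Ψ n (fun l => u (Equiv.swap i j l)) α

/-- (P2): local spin flips. -/
def PsiP2 (τ : ℂ) (Ψ : PsiFam) : Prop :=
  ∀ (n : ℕ) (u : Fin (2*n+1) → ℂ) (i : Fin (2*n+1)) (α : Fin (2*n+1) → Fin 2),
    Ψ n u (Function.update α i (flipS (α i)))
      = (-(pnome τ)) ^ n * Complex.exp (-Complex.I * ∑ j, (u j - u i))
        * Ψ n (Function.update u i (u i + Real.pi * τ)) α

/-- (P3): quasi-periodicity of `Ψ_n` in each `u_i`. -/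
def PsiP3 (τ : ℂ) (Ψ : PsiFam) : Prop :=
  ∀ (n : ℕ) (u : Fin (2*n+1) → ℂ) (i : Fin (2*n+1)),
    (Ψ n (Function.update u i (u i + Real.pi))
      = fun α => (∏ j ∈ Finset.univ.erase i, (if α j = 0 then (1:ℂ) else -1)) * Ψ n u α) ∧
    (Ψ n (Function.update u i (u i + 2 * Real.pi * τ))
      = fun α => (pnome τ ^ (4*n))⁻¹ *
          Complex.exp (-2 * Complex.I * ∑ j, (u i - u j)) * Ψ n u α)

/-- (P4): the wheel condition. -/
def PsiP4 (Ψ : PsiFam) : Prop :=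
  ∀ (n : ℕ) (u : Fin (2*n+1) → ℂ),
    (∃ i j k : Fin (2*n+1), i < j ∧ j < k ∧ u j = u i + 2*ηc ∧ u k = u i + 4*ηc) →
    Ψ n u = 0

/-- (P5): the reduction relations. -/
def PsiP5 (τ : ℂ) (Ψ : PsiFam) : Prop :=
  ∀ (n : ℕ) (u : Fin (2*(n+1)+1) → ℂ) (i : ℕ) (hi : i + 1 < 2*(n+1)+1),
    u ⟨i+1, hi⟩ = u ⟨i, by omega⟩ + 2*ηc →
    Ψ (n+1) u = fun α =>
      (∏ j ∈ (Finset.univ.erase (⟨i, by omega⟩ : Fin (2*(n+1)+1))).erase ⟨i+1, hi⟩,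
          th1 (u ⟨i, by omega⟩ - u j - 2*ηc) τ)
        * singletC (α ⟨i, by omega⟩) (α ⟨i+1, hi⟩)
        * Ψ n (delTwo i u) (delTwo i α)

/-- (P6): `Ψ₀ = ↑ + ↓`. -/
def PsiP6 (Ψ : PsiFam) : Prop := ∀ u α, Ψ 0 u α = 1

/-- The inhomogeneity parameters `(x₁,−x₁,…,x_n,−x_n,0)`. -/
def interleave {n : ℕ} (x : Fin n → ℂ) : Fin (2*n+1) → ℂ := fun j =>
  if h : (j : ℕ) < 2*n then
    (if (j : ℕ) % 2 = 0 then x ⟨(j:ℕ)/2, by omega⟩ else -x ⟨(j:ℕ)/2, by omega⟩)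
  else 0

/-- Components of `χ(x)`. -/
def chiC (τ lam x : ℂ) (s t : Fin 2) : ℂ :=
  if s = 0 ∧ t = 1 then th1 (x + lam) (2*τ) * th4 (x - lam - 2*ηc) (2*τ)
  else if s = 1 ∧ t = 0 then th1 (x - lam - 2*ηc) (2*τ) * th4 (x + lam) (2*τ)
  else 0

/-- Components of `χ̄(x)`. -/
def chibarC (τ lam x : ℂ) (s t : Fin 2) : ℂ :=
  if s = 0 ∧ t = 0 then th1 (x + lam) (2*τ) * th1 (x - lam - 2*ηc) (2*τ)
  else if s = 1 ∧ t = 1 then th4 (x - lam - 2*ηc) (2*τ) * th4 (x + lam) (2*τ)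
  else 0

/-- The scalar product `Z_n(x₁,…,x_n) = ⟨ξ_n(x₁,…,x_n), Ψ_n(x₁,−x₁,…,x_n,−x_n,0)⟩`. -/
def Zfun (τ lam : ℂ) (Ψ : PsiFam) (n : ℕ) (x : Fin n → ℂ) : ℂ :=
  ∑ α : Fin (2*n+1) → Fin 2,
    (∏ m : Fin n, chiC τ lam (x m)
        (α ⟨2*(m:ℕ), by have := m.2; omega⟩) (α ⟨2*(m:ℕ)+1, by have := m.2; omega⟩))
      * (if α ⟨2*n, by omega⟩ = 0 then (1:ℂ) else 0)
      * Ψ n (interleave x) α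

/-- The scalar product `Z̄_n^±(x₁,…,x_n)`, with `ε = ±1`. -/
def Zbarfun (τ lam ε : ℂ) (Ψ : PsiFam) (n : ℕ) (x : Fin n → ℂ) : ℂ :=
  ∑ α : Fin (2*n+1) → Fin 2,
    (∏ m : Fin n, chibarC τ lam (x m)
        (α ⟨2*(m:ℕ), by have := m.2; omega⟩) (α ⟨2*(m:ℕ)+1, by have := m.2; omega⟩))
      * (if α ⟨2*n, by omega⟩ = 0 then (1:ℂ) else ε)
      * Ψ n (interleave x) α

/-- The normalisation constant `𝒩_n`. -/
def Ncoef (τ : ℂ) (n : ℕ) : ℂ :=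
  (-1 : ℂ) ^ ((n+1)/2) * (th1 ηc τ ^ (n^2))⁻¹ * (th4 0 (2*τ) / th4 ηc (2*τ)) ^ (n*(n+1)/2)

/-- The vector `ψ_n = 𝒩_n Ψ_n(0,…,0)`. -/
def psiH (τ : ℂ) (Ψ : PsiFam) (n : ℕ) (α : Fin (2*n+1) → Fin 2) : ℂ :=
  Ncoef τ n * Ψ n (fun _ => 0) α

/-- The scalar product `S_n(μ) = ((⟨↑↓| + μ⟨↓↑|)^{⊗n} ⊗ ⟨↑|) ψ_n`. -/
def Sfun (τ : ℂ) (Ψ : PsiFam) (n : ℕ) (μ : ℂ) : ℂ :=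
  ∑ α : Fin (2*n+1) → Fin 2,
    (∏ m : Fin n,
      (if α ⟨2*(m:ℕ), by have := m.2; omega⟩ = 0 ∧ α ⟨2*(m:ℕ)+1, by have := m.2; omega⟩ = 1
        then (1:ℂ)
       else if α ⟨2*(m:ℕ), by have := m.2; omega⟩ = 1 ∧ α ⟨2*(m:ℕ)+1, by have := m.2; omega⟩ = 0
        then μ
       else 0))
      * (if α ⟨2*n, by omega⟩ = 0 then (1:ℂ) else 0) * psiH τ Ψ n α

/-- The scalar product `S̄_n^±(ν) = ((⟨↑↑| + ν⟨↓↓|)^{⊗n} ⊗ (⟨↑| ± ⟨↓|)) ψ_n`, with `ε = ±1`. -/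
def Sbarfun (τ ε : ℂ) (Ψ : PsiFam) (n : ℕ) (ν : ℂ) : ℂ :=
  ∑ α : Fin (2*n+1) → Fin 2,
    (∏ m : Fin n,
      (if α ⟨2*(m:ℕ), by have := m.2; omega⟩ = 0 ∧ α ⟨2*(m:ℕ)+1, by have := m.2; omega⟩ = 0
        then (1:ℂ)
       else if α ⟨2*(m:ℕ), by have := m.2; omega⟩ = 1 ∧ α ⟨2*(m:ℕ)+1, by have := m.2; omega⟩ = 1
        then ν
       else 0))
      * (if α ⟨2*n, by omega⟩ = 0 then (1:ℂ) else ε) * psiH τ Ψ n α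

/-- The alternating spin configuration `↑↓↑↓⋯↑`. -/
def altConf {L : ℕ} : Fin L → Fin 2 := fun j => if (j : ℕ) % 2 = 0 then 0 else 1

/-- The fully polarised spin configuration `↓⋯↓`. -/
def downConf {L : ℕ} : Fin L → Fin 2 := fun _ => 1

/-- The spin configuration `↑⋯↑↓` with a single `↓` at the last site. -/
def lastDownConf {n : ℕ} : Fin (2*n+1) → Fin 2 := fun j => if (j : ℕ) = 2*n then 1 else 0

/-- `J₂ = −1/2`. -/
def J2c : ℂ := -(1/2)
/-- `J₃ = 1/(1+ζ)`. -/
def J3c (ζ : ℂ) : ℂ := 1/(1+ζ)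
/-- `J₄ = 1/(1−ζ)`. -/
def J4c (ζ : ℂ) : ℂ := 1/(1-ζ)
/-- `μ̄ = (μ−1)²/((ζ²−1)μ)`. -/
def mubar (ζ μ : ℂ) : ℂ := (μ - 1)^2 / ((ζ^2 - 1)*μ)
/-- `ν̄ = (ν−ζ)(νζ−1)/((ζ²−1)ν)`. -/
def nubar (ζ ν : ℂ) : ℂ := (ν - ζ)*(ν*ζ - 1) / ((ζ^2 - 1)*ν)

/-- The elliptic function `w(x)`. -/
def wfun (τ x : ℂ) : ℂ :=
  th4 ηc (2*τ) / th4 0 (2*τ) * th1 x τ ^ 2 / (th1 (x - ηc) τ * th1 (x + ηc) τ)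

/-- `β₂ = η + π/2`. -/
def β2c : ℂ := ηc + (Real.pi : ℂ)/2
/-- `β₃ = η + π/2 + πτ/2`. -/
def β3c (τ : ℂ) : ℂ := ηc + (Real.pi : ℂ)/2 + (Real.pi : ℂ)*τ/2
/-- `β₄ = η + πτ/2`. -/
def β4c (τ : ℂ) : ℂ := ηc + (Real.pi : ℂ)*τ/2

/-- `f` is an (even) theta function of degree `m`, nome `p = e^{iπτ}` and norm `0`
with respect to each of its variables. -/
def ThetaLike (τ : ℂ) (m : ℕ) {n : ℕ} (X : (Fin n → ℂ) → ℂ) : Prop :=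
  ∀ (x : Fin n → ℂ) (i : Fin n),
    Differentiable ℂ (fun z => X (Function.update x i z)) ∧
    (∀ z, X (Function.update x i (z + Real.pi)) = X (Function.update x i z)) ∧
    (∀ z, X (Function.update x i (z + Real.pi * τ))
        = ((-(pnome τ)) ^ m)⁻¹ * Complex.exp (-2 * Complex.I * ((m : ℂ) * z))
            * X (Function.update x i z)) ∧
    (∀ z, X (Function.update x i (-z)) = X (Function.update x i z))

/-- The bijection `(j, a, b) ↦ (a + M b + j, a - b)`, where `0 ≤ j ≤ M`. -/
def latticeEquiv (M : ℕ) : Fin (M + 1) × (ℤ × ℤ) ≃ ℤ × ℤ where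
  toFun t := (t.2.1 + M * t.2.2 + (t.1 : ℕ), t.2.1 - t.2.2)
  invFun u :=
    (⟨((u.1 - u.2) % ((M : ℤ) + 1)).toNat, by
        have h1 := Int.emod_nonneg (u.1 - u.2) (show ((M : ℤ) + 1) ≠ 0 by omega)
        have h2 := Int.emod_lt_of_pos (u.1 - u.2) (show 0 < ((M : ℤ) + 1) by omega)
        omega⟩,
      (u.2 + (u.1 - u.2) / ((M : ℤ) + 1), (u.1 - u.2) / ((M : ℤ) + 1)))
  left_inv := by
    rintro ⟨j, a, b⟩
    have hj := j.2
    have hM : (M : ℤ) + 1 ≠ 0 := by omega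
    have e : a + M * b + (j : ℕ) - (a - b) = (j : ℕ) + ((M : ℤ) + 1) * b := by ring
    have hmod : (((j : ℕ) : ℤ) + ((M : ℤ) + 1) * b) % ((M : ℤ) + 1) = (j : ℕ) := by
      rw [Int.add_mul_emod_self_left]
      exact Int.emod_eq_of_lt (by omega) (by omega)
    have hdiv : (((j : ℕ) : ℤ) + ((M : ℤ) + 1) * b) / ((M : ℤ) + 1) = b := by
      rw [Int.add_mul_ediv_left _ _ hM, Int.ediv_eq_zero_of_lt (by omega) (by omega), zero_add]
    simp only [e, hmod, hdiv]
    simp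
  right_inv := by
    rintro ⟨n, m⟩
    have h1 := Int.emod_nonneg (n - m) (show ((M : ℤ) + 1) ≠ 0 by omega)
    have h2 := Int.emod_add_mul_ediv (n - m) ((M : ℤ) + 1)
    simp only [Int.toNat_of_nonneg h1, Prod.mk.injEq]
    constructor
    · linear_combination h2
    · ring

/-- Product formula for two theta functions whose periods are in the ratio `1 : M`. -/
lemma jacobiTheta₂_mul_jacobiTheta₂ (M : ℕ) (hM : 0 < M) (z w : ℂ) {τ : ℂ} (hτ : 0 < τ.im) :
    jacobiTheta₂ z τ * jacobiTheta₂ w (M * τ) =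
      ∑ j ∈ Finset.range (M + 1), cexp (2 * Real.pi * I * j * z + Real.pi * I * j ^ 2 * τ) *
        (jacobiTheta₂ (z + w + j * τ) ((M + 1) * τ) *
          jacobiTheta₂ (M * z - w + M * j * τ) (M * (M + 1) * τ)) := by
  rw [← Fin.sum_univ_eq_sum_range fun j : ℕ ↦
    cexp (2 * Real.pi * I * j * z + Real.pi * I * j ^ 2 * τ) *
      (jacobiTheta₂ (z + w + j * τ) ((M + 1) * τ) *
        jacobiTheta₂ (M * z - w + M * j * τ) (M * (M + 1) * τ))]
  have hMr : (0 : ℝ) < M := by exact_mod_cast hM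
  have h1 : 0 < ((M : ℂ) * τ).im := by simpa using mul_pos hMr hτ
  have h2 : 0 < (((M : ℂ) + 1) * τ).im := by
    have : 0 < ((M : ℝ) + 1) * τ.im := by positivity
    simpa using this
  have h3 : 0 < ((M : ℂ) * (M + 1) * τ).im := by
    have : 0 < (M : ℝ) * ((M : ℝ) + 1) * τ.im := by positivity
    simpa [mul_assoc] using mul_pos hMr h2
  have sn {z τ : ℂ} (hτ : 0 < τ.im) := ((summable_jacobiTheta₂_term_iff z τ).mpr hτ).norm
  have hs := summable_mul_of_summable_norm (sn (z := z) hτ) (sn (z := w) h1)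
  simp only [jacobiTheta₂]
  rw [tsum_mul_tsum_of_summable_norm (sn hτ) (sn h1), ← (latticeEquiv M).tsum_eq]
  have hs' := (latticeEquiv M).summable_iff.mpr hs
  simp only [Function.comp_def] at hs'
  rw [hs'.tsum_prod, tsum_fintype]
  refine Finset.sum_congr rfl fun j _ ↦ ?_
  rw [tsum_mul_tsum_of_summable_norm (sn h2) (sn h3), ← tsum_mul_left]
  refine tsum_congr fun ab ↦ ?_
  simp only [jacobiTheta₂_term, latticeEquiv, Equiv.coe_fn_mk, ← Complex.exp_add]
  congr 1
  push_cast
  ring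

/-- The product of three theta functions shifted by thirds of the period. -/
lemma exists_jacobiTheta₂_mul_third {τ : ℂ} (hτ : 0 < τ.im) :
    ∃ K : ℂ, ∀ z, jacobiTheta₂ z τ * jacobiTheta₂ (z + 1 / 3) τ * jacobiTheta₂ (z - 1 / 3) τ =
      K * jacobiTheta₂ (3 * z) (3 * τ) := by
  set Q : ℂ → ℂ := fun z ↦
    jacobiTheta₂ z τ * jacobiTheta₂ (z + 1 / 3) τ * jacobiTheta₂ (z - 1 / 3) τ with hQ
  set e : ℂ → ℂ := fun z ↦ cexp (2 * Real.pi * I * z) with he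
  obtain ⟨c₀, c₁, c₂, hc⟩ : ∃ c₀ c₁ c₂ : ℂ, ∀ z, Q z = c₀ * jacobiTheta₂ (3 * z) (3 * τ) +
      c₁ * (e z * jacobiTheta₂ (3 * z + τ) (3 * τ)) +
      c₂ * (e z ^ 2 * jacobiTheta₂ (3 * z + 2 * τ) (3 * τ)) := by
    set d₀ := jacobiTheta₂ (2 / 3) (2 * τ)
    set d₁ := cexp (2 * Real.pi * I / 3 + Real.pi * I * τ) * jacobiTheta₂ (2 / 3 + τ) (2 * τ)
    refine ⟨d₀ * jacobiTheta₂ 0 (6 * τ) + d₁ * cexp (Real.pi * I * 4 * τ) *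
        jacobiTheta₂ (3 * τ) (6 * τ) * cexp (-(3 * Real.pi * I * τ)),
      d₀ * cexp (Real.pi * I * τ) * jacobiTheta₂ (2 * τ) (6 * τ) + d₁ * jacobiTheta₂ (-τ) (6 * τ),
      d₀ * cexp (Real.pi * I * 4 * τ) * jacobiTheta₂ (4 * τ) (6 * τ) +
        d₁ * cexp (Real.pi * I * τ) * jacobiTheta₂ τ (6 * τ), fun z ↦ ?_⟩
    have m1 := jacobiTheta₂_mul_jacobiTheta₂ 1 one_pos (z + 1 / 3) (z - 1 / 3) hτ
    have m2 := jacobiTheta₂_mul_jacobiTheta₂ 2 two_pos z (2 * z) hτ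
    have m3 := jacobiTheta₂_mul_jacobiTheta₂ 2 two_pos z (2 * z + τ) hτ
    have m4 := jacobiTheta₂_add_left' (3 * z) (3 * τ)
    simp only [Finset.sum_range_succ, Finset.sum_range_zero, zero_add] at m1 m2 m3
    have a1 : z + 1 / 3 - (z - 1 / 3) = 2 / 3 := by ring
    have a2 : z + 1 / 3 + (z - 1 / 3) = 2 * z := by ring
    have a3 : z + 2 * z = 3 * z := by ring
    have a4 : z + (2 * z + τ) = 3 * z + τ := by ring
    have a5 : 3 * z + τ + τ = 3 * z + 2 * τ := by ring
    have a6 : 3 * z + τ + 2 * τ = 3 * z + 3 * τ := by ring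
    have a7 : 2 * z - (2 * z + τ) = -τ := by ring
    have a8 : -τ + 2 * τ = τ := by ring
    have a9 : -τ + 4 * τ = 3 * τ := by ring
    have a10 : (2 * (2 + 1) * τ : ℂ) = 6 * τ := by ring
    have a11 : ((2 + 1) * τ : ℂ) = 3 * τ := by ring
    have a12 : ((1 + 1) * τ : ℂ) = 2 * τ := by ring
    have a13 : (2 * 2 * τ : ℂ) = 4 * τ := by ring
    simp only [Nat.cast_one, Nat.cast_zero, Nat.cast_ofNat, one_mul, mul_one, mul_zero, zero_mul,
      add_zero, a1, a2, a3, a4, a5, a6, a7, a8, a9, a10, a11, a12, a13, sub_self, zero_add, ne_eq,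
      OfNat.ofNat_ne_zero, not_false_eq_true, zero_pow, Complex.exp_zero, one_pow] at m1 m2 m3
    rw [m4] at m3
    have b1 : cexp (2 * Real.pi * I * (z + 1 / 3) + Real.pi * I * τ) =
        e z * cexp (2 * Real.pi * I / 3 + Real.pi * I * τ) := by
      rw [he, ← Complex.exp_add]; ring_nf
    have b2 : cexp (2 * Real.pi * I * z + Real.pi * I * τ) = e z * cexp (Real.pi * I * τ) := by
      rw [he, ← Complex.exp_add]
    have b3 : cexp (2 * Real.pi * I * 2 * z + Real.pi * I * 2 ^ 2 * τ) =
        e z ^ 2 * cexp (Real.pi * I * 4 * τ) := by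
      rw [he, ← Complex.exp_nat_mul, ← Complex.exp_add]; push_cast; ring_nf
    have b4 : cexp (-Real.pi * I * (3 * τ + 2 * (3 * z))) * e z ^ 3 =
        cexp (-(3 * Real.pi * I * τ)) := by
      rw [he, ← Complex.exp_nat_mul, ← Complex.exp_add]; push_cast; ring_nf
    rw [b1] at m1
    rw [b2, b3] at m2 m3
    have : Q z = jacobiTheta₂ z τ * (jacobiTheta₂ (z + 1 / 3) τ * jacobiTheta₂ (z - 1 / 3) τ) := by
      simp only [hQ]; ring
    rw [this, m1]
    linear_combination d₀ * m2 + e z * d₁ * m3 + d₁ * cexp (Real.pi * I * 4 * τ) *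
        jacobiTheta₂ (3 * τ) (6 * τ) * jacobiTheta₂ (3 * z) (3 * τ) * b4
  have hQp : ∀ z, Q (z + 1 / 3) = Q z := by
    intro z
    have h : jacobiTheta₂ (z + 1 / 3 + 1 / 3) τ = jacobiTheta₂ (z - 1 / 3) τ := by
      rw [← jacobiTheta₂_add_left (z - 1 / 3)]; ring_nf
    simp only [hQ, h, add_sub_cancel_right]
    ring
  set ω := e (1 / 3) with hω
  have hω3 : ω ^ 3 = 1 := by
    rw [hω, he, ← Complex.exp_nat_mul, Complex.exp_eq_one_iff]; exact ⟨1, by push_cast; ring⟩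
  have hω1 : ω ≠ 1 := by
    have hp : IsPrimitiveRoot ω 3 := by
      have := Complex.isPrimitiveRoot_exp 3 (by norm_num)
      rw [hω, he]; convert this using 2; push_cast; ring
    exact hp.ne_one (by norm_num)
  have hω2 : 1 + ω + ω ^ 2 = 0 := by
    have : (ω - 1) * (1 + ω + ω ^ 2) = 0 := by linear_combination hω3
    exact (mul_eq_zero.mp this).resolve_left (sub_ne_zero.mpr hω1)
  have hes : ∀ z, e (z + 1 / 3) = ω * e z := by
    intro z; rw [hω, he, ← Complex.exp_add]; ring_nf
  have hper : ∀ z s, jacobiTheta₂ (3 * (z + 1 / 3) + s) (3 * τ) = jacobiTheta₂ (3 * z + s) (3 * τ) := by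
    intro z s
    rw [← jacobiTheta₂_add_left (3 * z + s)]; ring_nf
  have hper0 : ∀ z, jacobiTheta₂ (3 * (z + 1 / 3)) (3 * τ) = jacobiTheta₂ (3 * z) (3 * τ) := by
    intro z; simpa using hper z 0
  refine ⟨c₀, fun z ↦ ?_⟩
  have q0 := hc z
  have q1 := hc (z + 1 / 3)
  have q2 := hc (z + 1 / 3 + 1 / 3)
  simp only [hQp, hes, hper, hper0] at q0 q1 q2
  change Q z = _
  have h4 : ω ^ 4 = ω := by linear_combination ω * hω3
  linear_combination (q0 + q1 + q2) / 3 + (c₁ * (e z * jacobiTheta₂ (3 * z + τ) (3 * τ)) +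
      c₂ * (e z ^ 2 * jacobiTheta₂ (3 * z + 2 * τ) (3 * τ))) / 3 * hω2 +
      c₂ * (e z ^ 2 * jacobiTheta₂ (3 * z + 2 * τ) (3 * τ)) / 3 * h4

lemma th1_eq_jacobiTheta₂ (z τ : ℂ) :
    th1 z τ = -I * cexp (Real.pi * I * τ / 4 + I * z) *
      jacobiTheta₂ (z / Real.pi + τ / 2 + 1 / 2) τ := by
  have hpi : (Real.pi : ℂ) ≠ 0 := by exact_mod_cast Real.pi_ne_zero
  rw [th1, jacobiTheta₂, ← tsum_mul_left, ← tsum_mul_left]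
  refine tsum_congr fun n ↦ ?_
  rw [jacobiTheta₂_term, ← Complex.exp_pi_mul_I, ← Complex.exp_int_mul, ← Complex.exp_add,
    mul_assoc (-I) (cexp _) (cexp _), ← Complex.exp_add]
  congr 2
  field_simp
  ring

lemma differentiable_th1 {τ : ℂ} (hτ : 0 < τ.im) : Differentiable ℂ (fun z ↦ th1 z τ) := by
  have h : Differentiable ℂ (fun z ↦ jacobiTheta₂ z τ) :=
    fun z ↦ differentiableAt_jacobiTheta₂_fst z hτ
  simp only [th1_eq_jacobiTheta₂]
  exact (by fun_prop : Differentiable ℂ fun z ↦ -I * cexp (Real.pi * I * τ / 4 + I * z)).mul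
    (h.comp (by fun_prop : Differentiable ℂ fun z : ℂ ↦ z / Real.pi + τ / 2 + 1 / 2))

/-- The odd-index part of the theta series of doubled period. -/
def thetaOdd (τ z : ℂ) : ℂ := -cexp (Real.pi * I * τ / 2 + 2 * I * z) * jacobiTheta₂ (2 * z / Real.pi + τ) (2 * τ)

/-- The even-index part of the theta series of doubled period. -/
def thetaEven (τ z : ℂ) : ℂ := jacobiTheta₂ (2 * z / Real.pi) (2 * τ)

lemma differentiable_thetaEven {τ : ℂ} (hτ : 0 < τ.im) : Differentiable ℂ (thetaEven τ) := by
  have h : Differentiable ℂ (fun z ↦ jacobiTheta₂ z (2 * τ)) :=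
    fun z ↦ differentiableAt_jacobiTheta₂_fst z (by simpa using hτ)
  exact h.comp (by fun_prop : Differentiable ℂ fun z : ℂ ↦ 2 * z / Real.pi)

lemma th1_sub_mul_th1_add {τ : ℂ} (hτ : 0 < τ.im) (x y : ℂ) :
    th1 (x - y) τ * th1 (x + y) τ =
      thetaOdd τ x * thetaEven τ y - thetaEven τ x * thetaOdd τ y := by
  have hpi : (Real.pi : ℂ) ≠ 0 := by exact_mod_cast Real.pi_ne_zero
  have m := jacobiTheta₂_mul_jacobiTheta₂ 1 one_pos ((x + y) / Real.pi + τ / 2 + 1 / 2)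
    ((x - y) / Real.pi + τ / 2 + 1 / 2) hτ
  simp only [Finset.sum_range_succ, Finset.sum_range_zero, zero_add] at m
  have a1 : (x + y) / Real.pi + τ / 2 + 1 / 2 - ((x - y) / Real.pi + τ / 2 + 1 / 2) =
    2 * y / Real.pi := by ring
  have a2 : (x + y) / Real.pi + τ / 2 + 1 / 2 + ((x - y) / Real.pi + τ / 2 + 1 / 2) =
    2 * x / Real.pi + τ + 1 := by ring
  have a3 : 2 * x / Real.pi + τ + 1 + τ = 2 * x / Real.pi + 2 * τ + 1 := by ring
  have a12 : ((1 + 1) * τ : ℂ) = 2 * τ := by ring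
  simp only [Nat.cast_one, Nat.cast_zero, one_mul, mul_one, mul_zero, zero_mul,
      add_zero, a1, a2, a3, a12, ne_eq, OfNat.ofNat_ne_zero, not_false_eq_true, zero_pow,
      Complex.exp_zero, one_pow, jacobiTheta₂_add_left, jacobiTheta₂_add_left'] at m
  simp only [th1_eq_jacobiTheta₂, thetaOdd, thetaEven]
  have b1 : cexp (Real.pi * I * τ / 4 + I * (x - y)) * cexp (Real.pi * I * τ / 4 + I * (x + y)) =
      cexp (Real.pi * I * τ / 2 + 2 * I * x) := by
    rw [← Complex.exp_add]; ring_nf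
  have b2 : cexp (Real.pi * I * τ / 2 + 2 * I * x) *
      (cexp (2 * Real.pi * I * ((x + y) / Real.pi + τ / 2 + 1 / 2) + Real.pi * I * τ) *
        cexp (-Real.pi * I * (2 * τ + 2 * (2 * x / Real.pi)))) =
      - cexp (Real.pi * I * τ / 2 + 2 * I * y) := by
    have hneg (v : ℂ) : -cexp v = cexp (Real.pi * I + v) := by
      rw [Complex.exp_add, Complex.exp_pi_mul_I, neg_one_mul]
    rw [hneg, ← Complex.exp_add, ← Complex.exp_add]
    congr 1
    field_simp
    ring
  set T1 := jacobiTheta₂ ((x + y) / Real.pi + τ / 2 + 1 / 2) τ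
  set T2 := jacobiTheta₂ ((x - y) / Real.pi + τ / 2 + 1 / 2) τ
  linear_combination I ^ 2 * T1 * T2 * b1 + cexp (Real.pi * I * τ / 2 + 2 * I * x) * I ^ 2 * m
    + I ^ 2 * jacobiTheta₂ (2 * x / Real.pi) (2 * τ) * jacobiTheta₂ (2 * y / Real.pi + τ) (2 * τ) * b2
    + (cexp (Real.pi * I * τ / 2 + 2 * I * x) * jacobiTheta₂ (2 * x / Real.pi + τ) (2 * τ) *
      jacobiTheta₂ (2 * y / Real.pi) (2 * τ) - cexp (Real.pi * I * τ / 2 + 2 * I * y) *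
      jacobiTheta₂ (2 * x / Real.pi) (2 * τ) * jacobiTheta₂ (2 * y / Real.pi + τ) (2 * τ)) * Complex.I_sq

lemma exists_th1_mul_third {τ : ℂ} (hτ : 0 < τ.im) :
    ∃ K : ℂ, ∀ z, th1 z τ * th1 (z + ηc) τ * th1 (z - ηc) τ = K * th1 (3 * z) (3 * τ) := by
  have hpi : (Real.pi : ℂ) ≠ 0 := by exact_mod_cast Real.pi_ne_zero
  obtain ⟨K, hK⟩ := exists_jacobiTheta₂_mul_third hτ
  refine ⟨-K, fun z ↦ ?_⟩
  have h := hK (z / Real.pi + τ / 2 + 1 / 2)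
  have a0 : 3 * (z / Real.pi + τ / 2 + 1 / 2) = 3 * z / Real.pi + 3 * τ / 2 + 1 / 2 + 1 := by ring
  have a1 : (z + ηc) / Real.pi + τ / 2 + 1 / 2 = z / Real.pi + τ / 2 + 1 / 2 + 1 / 3 := by
    rw [ηc]; field_simp; ring
  have a2 : (z - ηc) / Real.pi + τ / 2 + 1 / 2 = z / Real.pi + τ / 2 + 1 / 2 - 1 / 3 := by
    rw [ηc]; field_simp; ring
  rw [a0, jacobiTheta₂_add_left] at h
  simp only [th1_eq_jacobiTheta₂, a1, a2]
  have b : cexp (Real.pi * I * τ / 4 + I * z) * cexp (Real.pi * I * τ / 4 + I * (z + ηc)) *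
      cexp (Real.pi * I * τ / 4 + I * (z - ηc)) =
      cexp (Real.pi * I * (3 * τ) / 4 + I * (3 * z)) := by
    rw [← Complex.exp_add, ← Complex.exp_add]; ring_nf
  set T1 := jacobiTheta₂ (z / Real.pi + τ / 2 + 1 / 2) τ
  set T2 := jacobiTheta₂ (z / Real.pi + τ / 2 + 1 / 2 + 1 / 3) τ
  set T3 := jacobiTheta₂ (z / Real.pi + τ / 2 + 1 / 2 - 1 / 3) τ
  set T4 := jacobiTheta₂ (3 * z / Real.pi + 3 * τ / 2 + 1 / 2) (3 * τ)
  linear_combination (-I ^ 3) * T1 * T2 * T3 * b + (-I ^ 3) *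
    cexp (Real.pi * I * (3 * τ) / 4 + I * (3 * z)) * h -
    I * K * T4 * cexp (Real.pi * I * (3 * τ) / 4 + I * (3 * z)) * Complex.I_sq

/-- At `η = π/3` the kernel `𝕙(x,y) ϑ₁(x-y) ϑ₁(x+y)` is antisymmetric of rank two. -/
lemma exists_hh_mul_th1 {τ : ℂ} (hτ : 0 < τ.im) :
    ∃ C D : ℂ → ℂ, Differentiable ℂ D ∧ ∀ x y,
      hh τ x y * (th1 (x - y) τ * th1 (x + y) τ) = C x * D y - D x * C y := by
  have hτ3 : 0 < (3 * τ).im := by simpa using hτ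
  obtain ⟨K, hK⟩ := exists_th1_mul_third hτ
  refine ⟨fun x ↦ K ^ 2 * thetaOdd (3 * τ) (3 * x), fun x ↦ thetaEven (3 * τ) (3 * x),
    (differentiable_thetaEven hτ3).comp (by fun_prop), fun x y ↦ ?_⟩
  have h := th1_sub_mul_th1_add hτ3 (3 * x) (3 * y)
  have h1 := hK (x - y)
  have h2 := hK (x + y)
  rw [mul_sub] at h1
  rw [mul_add] at h2
  rw [hh]
  linear_combination (th1 (x + y) τ * th1 (x + y + ηc) τ * th1 (x + y - ηc) τ) * h1 +
    K * th1 (3 * x - 3 * y) (3 * τ) * h2 + K ^ 2 * h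

section Algebra

variable {K : Type*} [Field K]

lemma prod_prod_erase_eq {k : ℕ} (f : Fin k → Fin k → K) :
    ∏ i, ∏ j ∈ Finset.univ.erase i, f i j =
      ∏ i, ∏ j, if i < j then f i j * f j i else 1 := by
  have h1 : ∀ i, ∏ j ∈ Finset.univ.erase i, f i j =
      (∏ j, if i < j then f i j else 1) * ∏ j, if j < i then f i j else 1 := by
    intro i
    rw [← Finset.prod_mul_distrib, ← Finset.mul_prod_erase _ _ (Finset.mem_univ i)]
    simp only [lt_self_iff_false, if_false, one_mul]
    refine Finset.prod_congr rfl fun j hj ↦ ?_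
    rcases lt_or_gt_of_ne (Finset.ne_of_mem_erase hj) with h | h
    · simp [h, h.not_gt]
    · simp [h, h.not_gt]
  simp only [h1]
  rw [Finset.prod_mul_distrib,
    Finset.prod_comm (f := fun i j ↦ if j < i then f i j else 1), ← Finset.prod_mul_distrib]
  refine Finset.prod_congr rfl fun i _ ↦ ?_
  rw [← Finset.prod_mul_distrib]
  refine Finset.prod_congr rfl fun j _ ↦ ?_
  split_ifs <;> simp

lemma det_vandermonde_sq {k : ℕ} (v : Fin k → K) :
    (Matrix.vandermonde v).det ^ 2 = (∏ i : Fin k, ∏ j : Fin k, if i < j then (-1 : K) else 1) *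
      ∏ i, ∏ j ∈ Finset.univ.erase i, (v i - v j) := by
  rw [prod_prod_erase_eq, Matrix.det_vandermonde, ← Finset.prod_mul_distrib, ← Finset.prod_pow]
  refine Finset.prod_congr rfl fun i _ ↦ ?_
  rw [← Finset.prod_mul_distrib, ← Finset.prod_pow, ← Finset.filter_lt_eq_Ioi, Finset.prod_filter]
  refine Finset.prod_congr rfl fun j _ ↦ ?_
  split_ifs
  · ring
  · simp

/-- Lagrange interpolation expresses one Vandermonde matrix through another. -/
lemma vandermonde_eq_mul_vandermonde {k : ℕ} (u v : Fin k → K) (hv : Function.Injective v)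
    (huv : ∀ i j, u i ≠ v j) :
    Matrix.vandermonde u = (Matrix.of fun i j ↦ (∏ l, (u i - v l)) *
      ((u i - v j)⁻¹ * (∏ l ∈ Finset.univ.erase j, (v j - v l))⁻¹)) * Matrix.vandermonde v := by
  ext i m
  have hdeg : (Polynomial.X ^ (m : ℕ) : Polynomial K).degree < (Finset.univ : Finset (Fin k)).card := by
    rw [Polynomial.degree_X_pow, Finset.card_fin]
    exact_mod_cast m.2
  have h := congrArg (Polynomial.eval (u i)) (Lagrange.eq_interpolate hv.injOn hdeg)
  rw [Lagrange.eval_interpolate_not_at_node _ (fun j _ ↦ huv i j), Lagrange.eval_nodal,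
    Finset.mul_sum] at h
  simp only [Polynomial.eval_pow, Polynomial.eval_X, Lagrange.nodalWeight,
    Finset.prod_inv_distrib] at h
  rw [Matrix.vandermonde_apply, h, Matrix.mul_apply]
  refine Finset.sum_congr rfl fun j _ ↦ ?_
  simp only [Matrix.of_apply, Matrix.vandermonde_apply]
  ring

/-- The rows `(α, α γ, …, α γ^{k-1}, 1, γ, …, γ^{k-1})`. -/
def doubleVandermondeRow (k : ℕ) (α γ : K) : Fin k ⊕ Fin k → K :=
  Sum.elim (fun m ↦ α * γ ^ (m : ℕ)) (fun m ↦ γ ^ (m : ℕ))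

lemma det_doubleVandermonde {k : ℕ} (α γ : Fin k ⊕ Fin k → K) (hγ : Function.Injective γ) :
    (Matrix.of fun r ↦ doubleVandermondeRow k (α r) (γ r)).det =
      (∏ i : Fin k, ∏ j : Fin k, if i < j then (-1 : K) else 1) *
        (∏ i, ∏ j, (γ (.inl i) - γ (.inr j))) *
        (Matrix.of fun i j ↦
          (α (.inl i) - α (.inr j)) * (γ (.inl i) - γ (.inr j))⁻¹).det := by
  set W₁ := Matrix.vandermonde (fun i ↦ γ (.inl i)) with hW₁
  set W₂ := Matrix.vandermonde (fun i ↦ γ (.inr i)) with hW₂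
  set a₁ : Fin k → K := fun i ↦ α (.inl i)
  set a₂ : Fin k → K := fun i ↦ α (.inr i)
  have hinj : Function.Injective (fun i : Fin k ↦ γ (.inr i)) := hγ.comp Sum.inr_injective
  have hV : (Matrix.of fun r ↦ doubleVandermondeRow k (α r) (γ r)) =
      Matrix.fromBlocks (Matrix.diagonal a₁ * W₁) W₁ (Matrix.diagonal a₂ * W₂) W₂ := by
    ext (r | r) (s | s) <;> simp [doubleVandermondeRow, W₁, W₂, a₁, a₂]
  have hdet : W₂.det ≠ 0 := Matrix.det_vandermonde_ne_zero_iff.mpr hinj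
  let : Invertible W₂ := Matrix.invertibleOfIsUnitDet _ (isUnit_iff_ne_zero.mpr hdet)
  obtain ⟨N, hN⟩ : ∃ N : Matrix (Fin k) (Fin k) K, N = Matrix.of fun i j ↦
    (∏ l, (γ (.inl i) - γ (.inr l))) * ((γ (.inl i) - γ (.inr j))⁻¹ *
      (∏ l ∈ Finset.univ.erase j, (γ (.inr j) - γ (.inr l)))⁻¹) := ⟨_, rfl⟩
  have hW : W₁ = N * W₂ := by
    rw [hN]
    exact vandermonde_eq_mul_vandermonde _ _ hinj (fun i j h ↦ by simpa using hγ h)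
  rw [hV, Matrix.det_fromBlocks₂₂, hW, Matrix.mul_assoc N W₂, mul_invOf_self,
    Matrix.mul_one, ← Matrix.mul_assoc, ← Matrix.mul_assoc, ← Matrix.sub_mul, Matrix.det_mul]
  have hsub : Matrix.diagonal a₁ * N - N * Matrix.diagonal a₂ = Matrix.of fun i j ↦
      (∏ l, (γ (.inl i) - γ (.inr l))) * ((∏ l ∈ Finset.univ.erase j, (γ (.inr j) - γ (.inr l)))⁻¹ *
        ((α (.inl i) - α (.inr j)) * (γ (.inl i) - γ (.inr j))⁻¹)) := by
    ext i j
    simp only [Matrix.sub_apply, Matrix.diagonal_mul, Matrix.mul_diagonal, hN, Matrix.of_apply, a₁, a₂]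
    ring
  have hne : (∏ j : Fin k, ∏ l ∈ Finset.univ.erase j, (γ (.inr j) - γ (.inr l))) ≠ 0 := by
    refine Finset.prod_ne_zero_iff.mpr fun j _ ↦ Finset.prod_ne_zero_iff.mpr fun l hl ↦ ?_
    exact sub_ne_zero.mpr fun h ↦ (Finset.ne_of_mem_erase hl) (hinj h).symm
  have hcol := Matrix.det_mul_column (fun i : Fin k ↦ ∏ l, (γ (.inl i) - γ (.inr l)))
    (Matrix.of fun i j : Fin k ↦ ((∏ l ∈ Finset.univ.erase j, (γ (.inr j) - γ (.inr l)))⁻¹ *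
        ((α (.inl i) - α (.inr j)) * (γ (.inl i) - γ (.inr j))⁻¹)))
  have hrow := Matrix.det_mul_row
    (fun j : Fin k ↦ (∏ l ∈ Finset.univ.erase j, (γ (.inr j) - γ (.inr l)))⁻¹)
    (Matrix.of fun i j : Fin k ↦ ((α (.inl i) - α (.inr j)) * (γ (.inl i) - γ (.inr j))⁻¹))
  simp only [Matrix.of_apply] at hcol hrow
  have hsq := det_vandermonde_sq (fun i ↦ γ (.inr i))
  rw [← hW₂] at hsq
  rw [hsub, hcol, hrow, Finset.prod_inv_distrib]
  generalize Matrix.det (Matrix.of fun i j : Fin k ↦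
    ((α (.inl i) - α (.inr j)) * (γ (.inl i) - γ (.inr j))⁻¹)) = d
  field_simp
  rw [hsq]
  ring

end Algebra

/-- The identification of `Fin k ⊕ Fin k` with `Fin (2 * k)` sending the summands to the halves. -/
def halfEquiv (k : ℕ) : Fin k ⊕ Fin k ≃ Fin (2 * k) :=
  finSumFinEquiv.trans (finCongr (two_mul k).symm)

lemma prod_lt_halfEquiv {k : ℕ} (F : Fin (2 * k) → Fin (2 * k) → ℂ) :
    (∏ r, ∏ s, if r < s then F r s else 1) =
      (∏ i, ∏ j, if i < j then F (halfEquiv k (.inl i)) (halfEquiv k (.inl j)) else 1) *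
      (∏ i, ∏ j, if i < j then F (halfEquiv k (.inr i)) (halfEquiv k (.inr j)) else 1) *
      ∏ i, ∏ j, F (halfEquiv k (.inl i)) (halfEquiv k (.inr j)) := by
  have h1 (i j : Fin k) : halfEquiv k (.inl i) < halfEquiv k (.inl j) ↔ i < j := by
    simp only [halfEquiv, Fin.lt_def]
    simp
  have h2 (i j : Fin k) : halfEquiv k (.inr i) < halfEquiv k (.inr j) ↔ i < j := by
    simp only [halfEquiv, Fin.lt_def]
    simp
  have h3 (i j : Fin k) : halfEquiv k (.inl i) < halfEquiv k (.inr j) := by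
    simp only [halfEquiv, Fin.lt_def]
    simp
    omega
  simp only [← (halfEquiv k).prod_comp, Fintype.prod_sum_type, h1, h2, h3, (h3 _ _).not_gt,
    if_true, if_false, Finset.prod_mul_distrib, Finset.prod_const_one]
  ring

/-- At generic points the Tsuchiya determinant is a quotient of two antisymmetric functions. -/
lemma tsuchiya_mul_det_projVandermonde {τ : ℂ} {k : ℕ} {A B C D : ℂ → ℂ} (x : Fin (2 * k) → ℂ)
    (hE : ∀ x y, th1 (x - y) τ * th1 (x + y) τ = A x * B y - B x * A y)
    (hG : ∀ x y, hh τ x y * (th1 (x - y) τ * th1 (x + y) τ) = C x * D y - D x * C y)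
    (hB : ∀ r, B (x r) ≠ 0) (hD : ∀ r, D (x r) ≠ 0)
    (hth : ∀ r s, r ≠ s → th1 (x r - x s) τ * th1 (x r + x s) τ ≠ 0)
    (hhh : ∀ r s, r ≠ s → hh τ (x r) (x s) ≠ 0) :
    tsuchiya τ k x * ((∏ i : Fin k, ∏ j : Fin k, if i < j then (-1 : ℂ) else 1) *
        (-1 : ℂ) ^ (k * k) *
        (Matrix.projVandermonde (fun r ↦ A (x r)) (fun r ↦ B (x r))).det) =
      (∏ r, ((D (x r) / B (x r)) ^ k * (D (x r) / B (x r))⁻¹ * B (x r) ^ k)) *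
        (Matrix.of fun r ↦ doubleVandermondeRow k
          (A (x (halfEquiv k r)) / B (x (halfEquiv k r)))
          (C (x (halfEquiv k r)) / D (x (halfEquiv k r)))).det := by
  set y : Fin k ⊕ Fin k → ℂ := fun r ↦ x (halfEquiv k r) with hy
  set α : Fin k ⊕ Fin k → ℂ := fun r ↦ A (y r) / B (y r) with hα
  set γ : Fin k ⊕ Fin k → ℂ := fun r ↦ C (y r) / D (y r) with hγ
  set b : Fin k ⊕ Fin k → ℂ := fun r ↦ B (y r) with hb
  set u : Fin k ⊕ Fin k → ℂ := fun r ↦ D (y r) / B (y r) with hu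
  have hb0 (r) : b r ≠ 0 := hB _
  have hd0 (r) : D (y r) ≠ 0 := hD _
  have hu0 (r) : u r ≠ 0 := div_ne_zero (hD _) (hB _)
  have eE (r s) : th1 (y r - y s) τ * th1 (y r + y s) τ = b r * b s * (α r - α s) := by
    have h1 := hb0 r
    have h2 := hb0 s
    rw [hE]
    simp only [hα, hb] at *
    field_simp
  have eG (r s) : hh τ (y r) (y s) * (α r - α s) = u r * u s * (γ r - γ s) := by
    have h1 := hb0 r
    have h2 := hb0 s
    have h3 := hd0 r
    have h4 := hd0 s
    have h := hG (y r) (y s)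
    rw [eE] at h
    have h' : u r * u s * (γ r - γ s) * (b r * b s) = C (y r) * D (y s) - D (y r) * C (y s) := by
      simp only [hu, hγ, hb] at *
      field_simp
    apply mul_right_cancel₀ (mul_ne_zero h1 h2)
    rw [h', ← h]
    ring
  have hα0 (r s) (hrs : r ≠ s) : α r - α s ≠ 0 := by
    have := hth _ _ ((halfEquiv k).injective.ne hrs)
    rw [show x (halfEquiv k r) = y r from rfl, show x (halfEquiv k s) = y s from rfl, eE] at this
    exact right_ne_zero_of_mul this
  have hγ0 (r s) (hrs : r ≠ s) : γ r - γ s ≠ 0 := by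
    have : hh τ (y r) (y s) ≠ 0 := hhh _ _ ((halfEquiv k).injective.ne hrs)
    exact right_ne_zero_of_mul (eG r s ▸ mul_ne_zero this (hα0 r s hrs))
  have hinj : Function.Injective γ := fun r s h ↦ by
    by_contra hrs
    exact hγ0 r s hrs (sub_eq_zero.mpr h)
  have eH (i j : Fin k) : hh τ (y (.inl i)) (y (.inr j)) =
      u (.inl i) * u (.inr j) * (γ (.inl i) - γ (.inr j)) / (α (.inl i) - α (.inr j)) :=
    (eq_div_iff (hα0 _ _ Sum.inl_ne_inr)).mpr (eG _ _)
  have eprod (f : Fin k ⊕ Fin k → ℂ) :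
      ∏ i : Fin k, ∏ j : Fin k, f (.inl i) * f (.inr j) = (∏ r, f r) ^ k := by
    simp [Finset.prod_mul_distrib, Finset.prod_const, Fintype.prod_sum_type, mul_pow,
      Finset.prod_pow]
  have ehprod : ∏ i : Fin k, ∏ j : Fin k, hh τ (y (.inl i)) (y (.inr j)) =
      (∏ r, u r) ^ k * (∏ i : Fin k, ∏ j : Fin k, (γ (.inl i) - γ (.inr j))) /
        ∏ i : Fin k, ∏ j : Fin k, (α (.inl i) - α (.inr j)) := by
    rw [← eprod u]
    simp only [eH, Finset.prod_div_distrib, Finset.prod_mul_distrib]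
  have edet : (Matrix.of fun i j : Fin k ↦ (hh τ (y (.inl i)) (y (.inr j)))⁻¹).det =
      (∏ r, u r)⁻¹ * (Matrix.of fun i j : Fin k ↦
        (α (.inl i) - α (.inr j)) * (γ (.inl i) - γ (.inr j))⁻¹).det := by
    have hcol := Matrix.det_mul_column (fun i : Fin k ↦ (u (.inl i))⁻¹)
      (Matrix.of fun i j : Fin k ↦ (u (.inr j))⁻¹ *
        ((α (.inl i) - α (.inr j)) * (γ (.inl i) - γ (.inr j))⁻¹))
    have hrow := Matrix.det_mul_row (fun j : Fin k ↦ (u (.inr j))⁻¹)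
      (Matrix.of fun i j : Fin k ↦ ((α (.inl i) - α (.inr j)) * (γ (.inl i) - γ (.inr j))⁻¹))
    simp only [Matrix.of_apply] at hcol hrow
    rw [hrow] at hcol
    rw [Fintype.prod_sum_type, mul_inv, ← Finset.prod_inv_distrib, ← Finset.prod_inv_distrib,
      mul_assoc, ← hcol]
    congr 1
    ext i j
    simp only [Matrix.of_apply, eH, mul_inv, div_eq_mul_inv, inv_inv]
    ring
  have eV : (Matrix.projVandermonde (fun r ↦ A (x r)) (fun r ↦ B (x r))).det =
      vdTheta τ (firstHalf x) * vdTheta τ (secondHalf x) * ((-1 : ℂ) ^ (k * k) *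
        (∏ r, b r) ^ k * ∏ i : Fin k, ∏ j : Fin k, (α (.inl i) - α (.inr j))) := by
    have e1 : (Matrix.projVandermonde (fun r ↦ A (x r)) (fun r ↦ B (x r))).det =
        ∏ r, ∏ s, if r < s then th1 (x s - x r) τ * th1 (x s + x r) τ else 1 := by
      rw [Matrix.det_projVandermonde]
      refine Finset.prod_congr rfl fun i _ ↦ ?_
      rw [← Finset.filter_lt_eq_Ioi, Finset.prod_filter]
      refine Finset.prod_congr rfl fun j _ ↦ ?_
      rw [hE, mul_comm (A (x i))]
    have e2 : ∏ i : Fin k, ∏ j : Fin k, th1 (y (.inr j) - y (.inl i)) τ *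
        th1 (y (.inr j) + y (.inl i)) τ = (-1 : ℂ) ^ (k * k) *
        (∏ r, b r) ^ k * ∏ i : Fin k, ∏ j : Fin k, (α (.inl i) - α (.inr j)) := by
      have e3 (i j : Fin k) : th1 (y (.inr j) - y (.inl i)) τ * th1 (y (.inr j) + y (.inl i)) τ =
          -1 * (b (.inl i) * b (.inr j)) * (α (.inl i) - α (.inr j)) := by
        rw [eE]; ring
      rw [← eprod b]
      simp only [e3, Finset.prod_mul_distrib, Finset.prod_const, Finset.card_univ, Fintype.card_fin,
        pow_mul]
    rw [e1, prod_lt_halfEquiv, ← e2]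
    rfl
  have ets : tsuchiya τ k x = (∏ i : Fin k, ∏ j : Fin k, hh τ (y (.inl i)) (y (.inr j))) /
      (vdTheta τ (firstHalf x) * vdTheta τ (secondHalf x)) *
        (Matrix.of fun i j : Fin k ↦ (hh τ (y (.inl i)) (y (.inr j)))⁻¹).det := rfl
  have hvd (z : Fin k → Fin (2 * k)) (hz : Function.Injective z) :
      vdTheta τ (fun i ↦ x (z i)) ≠ 0 := by
    refine Finset.prod_ne_zero_iff.mpr fun i _ ↦ Finset.prod_ne_zero_iff.mpr fun j _ ↦ ?_
    split_ifs with hij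
    · exact hth _ _ (hz.ne hij.ne')
    · exact one_ne_zero
  have hv1 : vdTheta τ (firstHalf x) ≠ 0 :=
    hvd (fun i ↦ halfEquiv k (.inl i)) ((halfEquiv k).injective.comp Sum.inl_injective)
  have hv2 : vdTheta τ (secondHalf x) ≠ 0 :=
    hvd (fun i ↦ halfEquiv k (.inr i)) ((halfEquiv k).injective.comp Sum.inr_injective)
  have hαp : ∏ i : Fin k, ∏ j : Fin k, (α (.inl i) - α (.inr j)) ≠ 0 :=
    Finset.prod_ne_zero_iff.mpr fun i _ ↦ Finset.prod_ne_zero_iff.mpr fun j _ ↦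
      hα0 _ _ Sum.inl_ne_inr
  have hw : ∏ r, ((D (x r) / B (x r)) ^ k * (D (x r) / B (x r))⁻¹ * B (x r) ^ k) =
      (∏ r, u r) ^ k * (∏ r, u r)⁻¹ * (∏ r, b r) ^ k := by
    rw [← (halfEquiv k).prod_comp]
    simp only [Finset.prod_mul_distrib, Finset.prod_inv_distrib, Finset.prod_pow, hu, hb, hy]
  have hsgn : ((-1 : ℂ) ^ (k * k)) * (-1 : ℂ) ^ (k * k) = 1 := by
    rw [← mul_pow]; simp
  have hup : ∏ r, u r ≠ 0 := Finset.prod_ne_zero_iff.mpr fun r _ ↦ hu0 r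
  rw [hw, ets, eV, ehprod, edet, det_doubleVandermonde α γ hinj]
  generalize Matrix.det (Matrix.of fun i j : Fin k ↦
        (α (.inl i) - α (.inr j)) * (γ (.inl i) - γ (.inr j))⁻¹) = d
  generalize (∏ i : Fin k, ∏ j : Fin k, if i < j then (-1 : ℂ) else 1) = ε
  generalize (∏ i : Fin k, ∏ j : Fin k, (α (.inl i) - α (.inr j))) = a at *
  generalize (∏ i : Fin k, ∏ j : Fin k, (γ (.inl i) - γ (.inr j))) = g
  generalize (-1 : ℂ) ^ (k * k) = ς at *
  field_simp
  linear_combination (g * d * ε * (∏ r, b r) ^ k) * hsgn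

lemma tsuchiya_comp_perm_of_generic {τ : ℂ} {k : ℕ} {A B C D : ℂ → ℂ} (x : Fin (2 * k) → ℂ)
    (σ : Equiv.Perm (Fin (2 * k)))
    (hE : ∀ x y, th1 (x - y) τ * th1 (x + y) τ = A x * B y - B x * A y)
    (hG : ∀ x y, hh τ x y * (th1 (x - y) τ * th1 (x + y) τ) = C x * D y - D x * C y)
    (hB : ∀ r, B (x r) ≠ 0) (hD : ∀ r, D (x r) ≠ 0)
    (hth : ∀ r s, r ≠ s → th1 (x r - x s) τ * th1 (x r + x s) τ ≠ 0)
    (hhh : ∀ r s, r ≠ s → hh τ (x r) (x s) ≠ 0) :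
    tsuchiya τ k (fun i ↦ x (σ i)) = tsuchiya τ k x := by
  have h := tsuchiya_mul_det_projVandermonde x hE hG hB hD hth hhh
  have hσ := tsuchiya_mul_det_projVandermonde (fun i ↦ x (σ i)) hE hG (fun r ↦ hB _)
    (fun r ↦ hD _) (fun r s hrs ↦ hth _ _ (σ.injective.ne hrs))
    (fun r s hrs ↦ hhh _ _ (σ.injective.ne hrs))
  have h1 : (Matrix.projVandermonde (fun r ↦ A (x (σ r))) (fun r ↦ B (x (σ r)))).det =
      ((Equiv.Perm.sign σ : ℤ) : ℂ) *
        (Matrix.projVandermonde (fun r ↦ A (x r)) (fun r ↦ B (x r))).det := by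
    rw [← Matrix.det_permute]; rfl
  have h2 : (Matrix.of fun r ↦ doubleVandermondeRow k
          (A (x (σ (halfEquiv k r))) / B (x (σ (halfEquiv k r))))
          (C (x (σ (halfEquiv k r))) / D (x (σ (halfEquiv k r))))).det =
      ((Equiv.Perm.sign σ : ℤ) : ℂ) * (Matrix.of fun r ↦ doubleVandermondeRow k
          (A (x (halfEquiv k r)) / B (x (halfEquiv k r)))
          (C (x (halfEquiv k r)) / D (x (halfEquiv k r)))).det := by
    rw [← Equiv.Perm.sign_permCongr (halfEquiv k).symm σ, ← Matrix.det_permute]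
    congr 1
    ext r s
    simp [Equiv.permCongr_apply]
  have h3 := Equiv.prod_comp σ fun r ↦ ((D (x r) / B (x r)) ^ k * (D (x r) / B (x r))⁻¹ * B (x r) ^ k)
  rw [h1, h2, h3] at hσ
  have hs : ((Equiv.Perm.sign σ : ℤ) : ℂ) ≠ 0 := by
    exact_mod_cast Int.cast_ne_zero.mpr (Equiv.Perm.sign σ).ne_zero
  have hε : (∏ i : Fin k, ∏ j : Fin k, if i < j then (-1 : ℂ) else 1) ≠ 0 :=
    Finset.prod_ne_zero_iff.mpr fun i _ ↦ Finset.prod_ne_zero_iff.mpr fun j _ ↦ by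
      split_ifs <;> simp
  have hV : (Matrix.projVandermonde (fun r ↦ A (x r)) (fun r ↦ B (x r))).det ≠ 0 := by
    rw [Matrix.det_projVandermonde]
    refine Finset.prod_ne_zero_iff.mpr fun i _ ↦ Finset.prod_ne_zero_iff.mpr fun j hj ↦ ?_
    rw [mul_comm (A (x i)), ← hE]
    exact hth _ _ (Finset.mem_Ioi.mp hj).ne'
  have hsgn : (-1 : ℂ) ^ (k * k) ≠ 0 := by simp
  apply mul_right_cancel₀ (mul_ne_zero hs (mul_ne_zero (mul_ne_zero hε hsgn) hV))
  linear_combination hσ - ((Equiv.Perm.sign σ : ℤ) : ℂ) * h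

open Filter Topology in
lemma eventually_comp_affine_ne_zero {f : ℂ → ℂ} (hf : Differentiable ℂ f) {z₀ : ℂ} (h₀ : f z₀ ≠ 0)
    (b : ℂ) {a : ℂ} (ha : a ≠ 0) : ∀ᶠ t in 𝓝[≠] (0 : ℂ), f (b + t * a) ≠ 0 := by
  have hg : Differentiable ℂ fun t : ℂ ↦ f (b + t * a) := hf.comp (by fun_prop)
  by_contra hcon
  have hfr : ∃ᶠ t in 𝓝[≠] (0 : ℂ), f (b + t * a) = 0 := by
    simpa [Filter.not_eventually] using hcon
  have han : AnalyticOnNhd ℂ (fun t : ℂ ↦ f (b + t * a)) Set.univ :=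
    fun t _ ↦ hg.analyticAt t
  have h := han.eqOn_zero_of_preconnected_of_frequently_eq_zero isPreconnected_univ
    (Set.mem_univ 0) hfr (Set.mem_univ ((z₀ - b) / a))
  apply h₀
  simpa [div_mul_cancel₀ _ ha] using h

lemma continuousAt_tsuchiya {τ : ℂ} (hτ : 0 < τ.im) {k : ℕ} {x : Fin (2 * k) → ℂ}
    (hx : tsuDefined τ k x) : ContinuousAt (tsuchiya τ k) x := by
  have hth : Continuous fun z ↦ th1 z τ := (differentiable_th1 hτ).continuous
  have hfst (i : Fin k) : Continuous fun x : Fin (2 * k) → ℂ ↦ firstHalf x i := continuous_apply _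
  have hsnd (i : Fin k) : Continuous fun x : Fin (2 * k) → ℂ ↦ secondHalf x i := continuous_apply _
  have hhc (i j : Fin k) :
      Continuous fun x : Fin (2 * k) → ℂ ↦ hh τ (firstHalf x i) (secondHalf x j) := by
    have h1 := hfst i
    have h2 := hsnd j
    unfold hh
    exact (((hth.comp (by fun_prop)).mul (hth.comp (by fun_prop))).mul
      (hth.comp (by fun_prop))).mul (hth.comp (by fun_prop))
  have hvd (g : (Fin (2 * k) → ℂ) → Fin k → ℂ) (hg : ∀ i, Continuous fun x ↦ g x i) :
      Continuous fun x ↦ vdTheta τ (g x) := by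
    refine continuous_finsetProd _ fun i _ ↦ continuous_finsetProd _ fun j _ ↦ ?_
    have h1 := hg i
    have h2 := hg j
    split_ifs
    · exact (hth.comp (by fun_prop)).mul (hth.comp (by fun_prop))
    · exact continuous_const
  have hvd0 (w : Fin k → ℂ)
      (hw : ∀ i j, i ≠ j → th1 (w j - w i) τ ≠ 0 ∧ th1 (w j + w i) τ ≠ 0) : vdTheta τ w ≠ 0 := by
    refine Finset.prod_ne_zero_iff.mpr fun i _ ↦ Finset.prod_ne_zero_iff.mpr fun j _ ↦ ?_
    split_ifs with hij
    · exact mul_ne_zero (hw i j hij.ne).1 (hw i j hij.ne).2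
    · exact one_ne_zero
  obtain ⟨hx1, hx2, hx3⟩ := hx
  refine ContinuousAt.mul (ContinuousAt.div ?_ ?_ ?_) ?_
  · exact (continuous_finsetProd _ fun i _ ↦ continuous_finsetProd _ fun j _ ↦ hhc i j).continuousAt
  · exact ((hvd _ hfst).mul (hvd _ hsnd)).continuousAt
  · exact mul_ne_zero (hvd0 _ hx1) (hvd0 _ hx2)
  · refine ContinuousAt.comp (g := Matrix.det) (Continuous.matrix_det continuous_id).continuousAt ?_
    exact continuousAt_pi.mpr fun i ↦ continuousAt_pi.mpr fun j ↦
      (hhc i j).continuousAt.inv₀ (hx3 i j)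

open Filter Topology in
theorem stmt0 (τ : ℂ) (hτ : 0 < τ.im) (k : ℕ) (hk : 1 ≤ k)
    (x : Fin (2*k) → ℂ) (σ : Equiv.Perm (Fin (2*k)))
    (hx : tsuDefined τ k x) (hxσ : tsuDefined τ k (fun i => x (σ i))) :
    tsuchiya τ k (fun i => x (σ i)) = tsuchiya τ k x := by
  obtain ⟨C, D, hDd, hG⟩ := exists_hh_mul_th1 hτ
  have hE := th1_sub_mul_th1_add hτ
  have hT := differentiable_th1 hτ
  -- none of the relevant entire functions vanishes identically
  obtain ⟨z₀, hz₀⟩ : ∃ z₀, th1 z₀ τ ≠ 0 := by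
    have := hx.2.2 ⟨0, hk⟩ ⟨0, hk⟩
    exact ⟨_, right_ne_zero_of_mul this⟩
  have hT0 (b : ℂ) {a : ℂ} (ha : a ≠ 0) : ∀ᶠ t in 𝓝[≠] (0 : ℂ), th1 (b + t * a) τ ≠ 0 :=
    eventually_comp_affine_ne_zero hT hz₀ b ha
  have hpt : ∃ p q, hh τ p q ≠ 0 ∧ th1 (p - q) τ * th1 (p + q) τ ≠ 0 := by
    have e1 := hT0 0 (show (2 - 1 : ℂ) ≠ 0 by norm_num)
    have e2 := hT0 0 (show (2 + 1 : ℂ) ≠ 0 by norm_num)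
    have e3 := hT0 ηc (show (2 - 1 : ℂ) ≠ 0 by norm_num)
    have e4 := hT0 (-ηc) (show (2 - 1 : ℂ) ≠ 0 by norm_num)
    have e5 := hT0 ηc (show (2 + 1 : ℂ) ≠ 0 by norm_num)
    have e6 := hT0 (-ηc) (show (2 + 1 : ℂ) ≠ 0 by norm_num)
    obtain ⟨t, h1, h2, h3, h4, h5, h6⟩ :=
      (e1.and (e2.and (e3.and (e4.and (e5.and e6))))).exists
    refine ⟨t * 2, t, ?_, ?_⟩
    · rw [hh]
      refine mul_ne_zero (mul_ne_zero (mul_ne_zero ?_ ?_) ?_) ?_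
      · convert h3 using 2; ring
      · convert h4 using 2; ring
      · convert h5 using 2; ring
      · convert h6 using 2; ring
    · refine mul_ne_zero ?_ ?_
      · convert h1 using 2; ring
      · convert h2 using 2; ring
  obtain ⟨p, q, hpq1, hpq2⟩ := hpt
  obtain ⟨zB, hzB⟩ : ∃ z, thetaEven τ z ≠ 0 := by
    by_contra! h
    exact hpq2 (by rw [hE, h, h]; ring)
  obtain ⟨zD, hzD⟩ : ∃ z, D z ≠ 0 := by
    by_contra! h
    exact mul_ne_zero hpq1 hpq2 (by rw [hG, h, h]; ring)
  -- perturb `x` along a generic direction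
  set v : Fin (2 * k) → ℂ := fun r ↦ ((r : ℕ) : ℂ) + 1 with hv
  have hv0 (r) : v r ≠ 0 := Nat.cast_add_one_ne_zero _
  have hva (r s) : v r + v s ≠ 0 := by
    have : ((((r : ℕ) + (s : ℕ) + 1 : ℕ) : ℂ) + 1) ≠ 0 := Nat.cast_add_one_ne_zero _
    convert this using 1
    simp only [hv]; push_cast; ring
  have hvs (r s) (hrs : r ≠ s) : v r - v s ≠ 0 := by
    simp only [hv, add_sub_add_right_eq_sub, sub_ne_zero]
    exact fun h ↦ hrs (Fin.ext (Nat.cast_injective h))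
  set X : ℂ → Fin (2 * k) → ℂ := fun t r ↦ x r + t * v r with hX
  have hX0 : X 0 = x := by funext r; simp [hX]
  have hB : ∀ᶠ t in 𝓝[≠] (0 : ℂ), ∀ r, thetaEven τ (X t r) ≠ 0 :=
    eventually_all.mpr fun r ↦
      eventually_comp_affine_ne_zero (differentiable_thetaEven hτ) hzB _ (hv0 r)
  have hD : ∀ᶠ t in 𝓝[≠] (0 : ℂ), ∀ r, D (X t r) ≠ 0 :=
    eventually_all.mpr fun r ↦ eventually_comp_affine_ne_zero hDd hzD _ (hv0 r)
  have hsub (c : ℂ) : ∀ᶠ t in 𝓝[≠] (0 : ℂ), ∀ r s, r ≠ s → th1 (X t r - X t s + c) τ ≠ 0 := by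
    refine eventually_all.mpr fun r ↦ eventually_all.mpr fun s ↦ eventually_all.mpr fun hrs ↦ ?_
    filter_upwards [hT0 (x r - x s + c) (hvs r s hrs)] with t ht
    convert ht using 2; simp only [hX]; ring
  have hadd (c : ℂ) : ∀ᶠ t in 𝓝[≠] (0 : ℂ), ∀ r s, th1 (X t r + X t s + c) τ ≠ 0 := by
    refine eventually_all.mpr fun r ↦ eventually_all.mpr fun s ↦ ?_
    filter_upwards [hT0 (x r + x s + c) (hva r s)] with t ht
    convert ht using 2; simp only [hX]; ring
  have heq : ∀ᶠ t in 𝓝[≠] (0 : ℂ),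
      tsuchiya τ k (fun i ↦ X t (σ i)) = tsuchiya τ k (X t) := by
    filter_upwards [hB, hD, hsub 0, hsub ηc, hsub (-ηc), hadd 0, hadd ηc, hadd (-ηc)] with
      t h1 h2 h3 h4 h5 h6 h7 h8
    simp only [add_zero, ← sub_eq_add_neg] at h3 h5 h6 h8
    exact tsuchiya_comp_perm_of_generic (X t) σ hE hG h1 h2
      (fun r s hrs ↦ mul_ne_zero (h3 r s hrs) (h6 r s))
      (fun r s hrs ↦ mul_ne_zero (mul_ne_zero (mul_ne_zero (h4 r s hrs) (h5 r s hrs)) (h7 r s))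
        (h8 r s))
  have hXc : Continuous X := continuous_pi fun r ↦ by fun_prop
  have hXσc : Continuous fun t ↦ (fun i ↦ X t (σ i)) := continuous_pi fun r ↦ by fun_prop
  have hl : Tendsto (fun t ↦ tsuchiya τ k (X t)) (𝓝[≠] 0) (𝓝 (tsuchiya τ k x)) := by
    have : ContinuousAt (fun t ↦ tsuchiya τ k (X t)) 0 :=
      ContinuousAt.comp (g := tsuchiya τ k) (hX0 ▸ continuousAt_tsuchiya hτ hx) hXc.continuousAt
    simpa only [hX0] using this.tendsto.mono_left nhdsWithin_le_nhds
  have hr : Tendsto (fun t ↦ tsuchiya τ k (fun i ↦ X t (σ i))) (𝓝[≠] 0)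
      (𝓝 (tsuchiya τ k fun i ↦ x (σ i))) := by
    have : ContinuousAt (fun t ↦ tsuchiya τ k (fun i ↦ X t (σ i))) 0 :=
      ContinuousAt.comp (g := tsuchiya τ k) (f := fun t ↦ (fun i ↦ X t (σ i)))
        (by simpa only [hX0] using continuousAt_tsuchiya hτ hxσ) hXσc.continuousAt
    simpa only [hX0] using this.tendsto.mono_left nhdsWithin_le_nhds
  exact tendsto_nhds_unique (hr.congr' heq) hl

end
end

section
/- Let k ≥ 1 and η = π/3. Set w_i = w(x_i) for i = 1,…,2k. If ζ = (ϑ₁(η,p²)/ϑ₄(η,p²))², then ℍ_{2k}(x₁,…,x_k; x_{k+1},…,x_{2k}) = f(x₁,…,x_{2k}) · H_{2k}(w₁,…,w_{2k}), where f(x₁,…,x_{2k}) = (ϑ₄(η,p²)/(ϑ₁(η)² ϑ₄(0,p²)))^{k(k−1)} · ∏_{i=1}^{2k} (ϑ₁(x_i+η)ϑ₁(x_i−η))^{k−1}, at every point where both sides are defined. -/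
noncomputable section

open Complex
open scoped BigOperators

theorem th1_eq_th2 (z τ : ℂ) : th1 z τ = th2 (z - Real.pi / 2) τ := by
  unfold th1 th2
  rw [← tsum_mul_left]
  refine tsum_congr fun n => ?_
  have h : Complex.exp (-(Real.pi / 2 * I)) = -I := by
    rw [Complex.exp_neg, Complex.exp_pi_div_two_mul_I, Complex.inv_I]
  have h1 : (-1 : ℂ) ^ n = Complex.exp (n * (-(Real.pi * I))) := by
    rw [Complex.exp_int_mul, Complex.exp_neg, Complex.exp_pi_mul_I]; norm_num
  rw [h1, ← h, ← Complex.exp_add, ← Complex.exp_add]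
  congr 1
  ring

theorem th4_eq_th3 (z τ : ℂ) : th4 z τ = th3 (z + Real.pi / 2) τ := by
  unfold th4 th3
  refine tsum_congr fun n => ?_
  have h1 : (-1 : ℂ) ^ n = Complex.exp (n * (Real.pi * I)) := by
    rw [Complex.exp_int_mul, Complex.exp_pi_mul_I]
  rw [h1, ← Complex.exp_add]
  congr 1
  ring

theorem th1_neg (z τ : ℂ) : th1 (-z) τ = -th1 z τ := by
  unfold th1
  rw [← mul_neg, ← tsum_neg, ← (Equiv.subLeft (-1 : ℤ)).tsum_eq]
  congr 1
  refine tsum_congr fun n => ?_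
  have h1 : (-1 : ℂ) ^ (-1 - n) = -(-1) ^ n := by
    rw [zpow_sub₀ (by norm_num), zpow_neg_one]
    rcases Int.even_or_odd n with h | h
    · rw [h.neg_one_zpow]; norm_num
    · rw [h.neg_one_zpow]; norm_num
  simp only [Equiv.subLeft_apply, h1, neg_mul]
  congr 3
  push_cast
  ring

theorem th2_add_pi (z τ : ℂ) : th2 (z + Real.pi) τ = -th2 z τ := by
  unfold th2
  rw [← tsum_neg]
  refine tsum_congr fun n => ?_
  have h1 : Complex.exp (n * (2 * Real.pi * I) + Real.pi * I) = -1 := by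
    rw [Complex.exp_add, Complex.exp_int_mul_two_pi_mul_I, Complex.exp_pi_mul_I, one_mul]
  rw [← mul_neg_one, ← h1, ← Complex.exp_add]
  congr 1
  ring

theorem th1_add_pi (z τ : ℂ) : th1 (z + Real.pi) τ = -th1 z τ := by
  rw [th1_eq_th2, th1_eq_th2, ← th2_add_pi]
  congr 1
  ring

theorem th2_add_half_pi (z τ : ℂ) : th2 (z + Real.pi / 2) τ = -th1 z τ := by
  rw [th1_eq_th2, ← th2_add_pi]
  congr 1
  ring

theorem th4_neg (z τ : ℂ) : th4 (-z) τ = th4 z τ := by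
  unfold th4
  rw [← (Equiv.neg ℤ).tsum_eq]
  refine tsum_congr fun n => ?_
  have h1 : (-1 : ℂ) ^ (-n) = (-1) ^ n := by
    rw [zpow_neg, ← inv_zpow]; norm_num
  simp only [Equiv.neg_apply, h1]
  congr 2
  push_cast
  ring

theorem th4_add_pi (z τ : ℂ) : th4 (z + Real.pi) τ = th4 z τ := by
  unfold th4
  refine tsum_congr fun n => ?_
  congr 1
  refine Eq.trans ?_ (Complex.exp_periodic.int_mul n _)
  congr 1
  ring

/-- Shift of `ϑ₁` by half of its quasi-period. -/
theorem th1_sub_half_quasi_period (z τ : ℂ) :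
    th1 (z - Real.pi * τ / 2) τ
      = -I * (Complex.exp (I * z - Real.pi * I * τ / 4) * th4 z τ) := by
  unfold th1 th4
  rw [← tsum_mul_left (a := Complex.exp _)]
  congr 1
  refine tsum_congr fun n => ?_
  rw [mul_left_comm, ← Complex.exp_add]
  congr 2
  ring

theorem summable_th3 (z : ℂ) {τ : ℂ} (hτ : 0 < τ.im) :
    Summable fun n : ℤ =>
      Complex.exp ((Real.pi : ℂ) * I * τ * (n : ℂ) ^ 2 + 2 * (n : ℂ) * I * z) := by
  refine ((summable_jacobiTheta₂_term_iff (z / Real.pi) τ).2 hτ).congr fun n => ?_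
  unfold jacobiTheta₂_term
  congr 1
  field_simp [Complex.ofReal_ne_zero.2 Real.pi_ne_zero]
  ring

theorem summable_th2 (z : ℂ) {τ : ℂ} (hτ : 0 < τ.im) :
    Summable fun n : ℤ =>
      Complex.exp ((Real.pi : ℂ) * I * τ * ((n : ℂ) + 1 / 2) ^ 2
        + (2 * (n : ℂ) + 1) * I * z) := by
  refine ((summable_th3 (z + Real.pi * τ / 2) hτ).mul_left
    (Complex.exp (Real.pi * I * τ / 4 + I * z))).congr fun n => ?_
  rw [← Complex.exp_add]
  congr 1
  ring

/-- Pairs of integers, split by the parity of their difference. -/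
def parityEquiv : (ℤ × ℤ) ⊕ (ℤ × ℤ) ≃ ℤ × ℤ where
  toFun := Sum.elim (fun p => (p.1 + p.2, p.1 - p.2 - 1)) (fun p => (p.1 + p.2, p.1 - p.2))
  invFun p := if Even (p.1 - p.2) then .inr (p.1 - (p.1 - p.2) / 2, (p.1 - p.2) / 2)
    else .inl (p.1 - (p.1 - p.2) / 2, (p.1 - p.2) / 2)
  left_inv := by
    rintro (⟨r, s⟩ | ⟨r, s⟩)
    · have h : ¬ Even (r + s - (r - s - 1)) := by rw [Int.even_iff]; omega
      simp only [Sum.elim_inl, h, if_false, Sum.inl.injEq, Prod.mk.injEq]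
      omega
    · have h : Even (r + s - (r - s)) := by rw [Int.even_iff]; omega
      simp only [Sum.elim_inr, h, if_true, Sum.inr.injEq, Prod.mk.injEq]
      omega
  right_inv := by
    rintro ⟨n, m⟩
    by_cases h : Even (n - m)
    · simp only [h, if_true, Sum.elim_inr, Prod.mk.injEq]
      rw [Int.even_iff] at h
      omega
    · simp only [h, if_false, Sum.elim_inl, Prod.mk.injEq]
      rw [Int.even_iff] at h
      omega

/-- The addition formula expressing `ϑ₁(x+y)ϑ₁(x-y)` through theta functions of squared nome. -/
theorem th1_add_mul_th1_sub (x y : ℂ) {τ : ℂ} (hτ : 0 < τ.im) :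
    th1 (x + y) τ * th1 (x - y) τ
      = th3 (2 * x) (2 * τ) * th2 (2 * y) (2 * τ)
        - th2 (2 * x) (2 * τ) * th3 (2 * y) (2 * τ) := by
  have h2τ : 0 < (2 * τ).im := by simpa using hτ
  rw [th1_eq_th2, th1_eq_th2]
  unfold th2 th3
  rw [tsum_mul_tsum_of_summable_norm (summable_th2 _ hτ).norm (summable_th2 _ hτ).norm,
    tsum_mul_tsum_of_summable_norm (summable_th3 _ h2τ).norm (summable_th2 _ h2τ).norm,
    tsum_mul_tsum_of_summable_norm (summable_th2 _ h2τ).norm (summable_th3 _ h2τ).norm,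
    ← parityEquiv.tsum_eq]
  have hs := (parityEquiv.summable_iff).2 (summable_mul_of_summable_norm
    (summable_th2 (x + y - Real.pi / 2) hτ).norm (summable_th2 (x - y - Real.pi / 2) hτ).norm)
  refine (Summable.tsum_sum (hs.comp_injective Sum.inl_injective)
    (hs.comp_injective Sum.inr_injective)).trans (Eq.trans ?_ (sub_eq_add_neg _ _).symm)
  rw [← tsum_neg]
  congr 1
  · refine tsum_congr fun p => ?_
    simp only [parityEquiv, Function.comp_apply, Equiv.coe_fn_mk, Sum.elim_inl]
    rw [← Complex.exp_add, ← Complex.exp_add]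
    refine Eq.trans ?_ (Complex.exp_periodic.int_mul (-p.1) _)
    congr 1
    push_cast
    ring
  · refine tsum_congr fun p => ?_
    simp only [parityEquiv, Function.comp_apply, Equiv.coe_fn_mk, Sum.elim_inr]
    have h1 : Complex.exp (-p.1 * (2 * Real.pi * I) - Real.pi * I) = -1 := by
      rw [Complex.exp_sub, ← Int.cast_neg, Complex.exp_int_mul_two_pi_mul_I,
        Complex.exp_pi_mul_I]
      norm_num
    rw [← mul_neg_one, ← Complex.exp_add, ← Complex.exp_add, ← h1, ← Complex.exp_add]
    congr 1
    push_cast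
    ring

/-- A three-term relation for `ϑ₁`. -/
theorem th1_three_term (x y c : ℂ) {τ : ℂ} (hτ : 0 < τ.im) :
    th1 c τ ^ 2 * (th1 (x + y) τ * th1 (x - y) τ)
      = th1 y τ ^ 2 * (th1 (x + c) τ * th1 (x - c) τ)
        - th1 x τ ^ 2 * (th1 (y + c) τ * th1 (y - c) τ) := by
  have hsq : ∀ z, th1 z τ ^ 2 = th3 (2 * z) (2 * τ) * th2 (2 * 0) (2 * τ)
      - th2 (2 * z) (2 * τ) * th3 (2 * 0) (2 * τ) := fun z => by
    rw [← th1_add_mul_th1_sub z 0 hτ, add_zero, sub_zero, sq]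
  rw [hsq, hsq, hsq, th1_add_mul_th1_sub _ _ hτ, th1_add_mul_th1_sub _ _ hτ,
    th1_add_mul_th1_sub _ _ hτ]
  ring

/-- Duplication formula for `ϑ₄`. -/
theorem th4_pow_four_sub_th1_pow_four (z : ℂ) {τ : ℂ} (hτ : 0 < τ.im) :
    th4 z τ ^ 4 - th1 z τ ^ 4 = th4 0 τ ^ 3 * th4 (2 * z) τ := by
  set ω : ℂ := Real.pi * τ / 2
  set d := Complex.exp (-(Real.pi * I * τ / 4)) with hd
  have hsub : ∀ w, th1 (w - ω) τ = -I * (Complex.exp (I * w) * d * th4 w τ) := fun w => by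
    rw [th1_sub_half_quasi_period, hd, ← Complex.exp_add, sub_eq_add_neg]
  have hadd : ∀ w, th1 (w + ω) τ = I * ((Complex.exp (I * w))⁻¹ * d * th4 w τ) := fun w => by
    rw [← neg_neg (w + ω), th1_neg, neg_add', hsub, th4_neg, mul_neg, Complex.exp_neg]
    ring
  have hd0 : d ≠ 0 := Complex.exp_ne_zero _
  set e := Complex.exp (I * z) with he
  have he0 : e ≠ 0 := Complex.exp_ne_zero _
  have h2z : Complex.exp (I * (2 * z)) = e ^ 2 := by
    rw [he, ← Complex.exp_nat_mul]
    congr 1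
    push_cast
    ring
  have hωe : Complex.exp (I * (z - ω)) = e * d ^ 2 := by
    rw [he, hd, ← Complex.exp_nat_mul, ← Complex.exp_add]
    congr 1
    push_cast
    ring
  have h1 : th1 (z - ω - ω) τ = -(e ^ 2 * d ^ 4) * th1 z τ := by
    have h := hadd (z - ω)
    rw [sub_add_cancel, hωe] at h
    rw [hsub, h, hωe]
    field_simp
  have h0 := hadd 0
  have h0' := hsub 0
  rw [zero_add, mul_zero, Complex.exp_zero] at h0
  rw [zero_sub, mul_zero, Complex.exp_zero] at h0'
  have key := th1_three_term (z - ω) z ω hτ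
  rw [h1, show z - ω + z = 2 * z - ω by ring, show z - ω - z = -ω by ring, sub_add_cancel,
    hsub (2 * z), h0, h0', hsub z, hadd z, h2z, ← he] at key
  field_simp at key
  ring_nf at key
  rw [Complex.I_pow_four, mul_comm z 2] at key
  linear_combination -key

/-- A Landen-type addition formula. -/
theorem th1_add_half_pi_mul_th1 (a b : ℂ) {τ : ℂ} (hτ : 0 < τ.im) :
    th1 (a + b + Real.pi / 2) τ * th1 (a - b) τ
      = th1 (2 * a) (2 * τ) * th4 (2 * b) (2 * τ)
        - th4 (2 * a) (2 * τ) * th1 (2 * b) (2 * τ) := by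
  have h := th1_add_mul_th1_sub (a + Real.pi / 4) (b + Real.pi / 4) hτ
  have e : ∀ z : ℂ, 2 * (z + Real.pi / 4) = 2 * z + Real.pi / 2 := fun z => by ring
  rw [e, e, ← th4_eq_th3, ← th4_eq_th3, th2_add_half_pi, th2_add_half_pi,
    add_sub_add_right_eq_sub,
    show a + Real.pi / 4 + (b + Real.pi / 4) = a + b + Real.pi / 2 by ring] at h
  rw [h]
  ring

theorem th1_add_two_eta (y τ : ℂ) : th1 (y + ηc + ηc) τ = -th1 (y - ηc) τ := by
  rw [← th1_add_pi]
  unfold ηc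
  congr 1
  ring

theorem th1_sub_two_eta (y τ : ℂ) : th1 (y - ηc - ηc) τ = -th1 (y + ηc) τ := by
  rw [← neg_inj, neg_neg, ← th1_add_pi]
  unfold ηc
  congr 1
  ring

theorem th1_two_eta (τ : ℂ) : th1 (2 * ηc) τ = th1 ηc τ := by
  rw [← neg_neg (th1 (2 * ηc) τ), ← th1_neg, ← th1_add_pi]
  unfold ηc
  congr 1
  ring

theorem th4_two_eta (τ : ℂ) : th4 (2 * ηc) τ = th4 ηc τ := by
  rw [← th4_neg, ← th4_add_pi]
  unfold ηc
  congr 1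
  ring

theorem th1_half_pi_sub (z τ : ℂ) : th1 (Real.pi / 2 - z) τ = th1 (Real.pi / 2 + z) τ := by
  rw [← neg_sub, th1_neg, ← th1_add_pi]
  congr 1
  ring

theorem hh_comm (τ x y : ℂ) : hh τ x y = hh τ y x := by
  unfold hh
  rw [show x - y + ηc = -(y - x - ηc) by ring, show x - y - ηc = -(y - x + ηc) by ring,
    th1_neg, th1_neg, add_comm x y]
  ring

/-- Expansion of `𝕙(x,y)` at `η = π/3` in powers of `ϑ₁(x)`. -/
theorem th1_eta_pow_four_mul_hh (x y : ℂ) {τ : ℂ} (hτ : 0 < τ.im) :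
    th1 ηc τ ^ 4 * hh τ x y
      = (th1 (x + ηc) τ * th1 (x - ηc) τ) ^ 2 * (th1 (y + ηc) τ * th1 (y - ηc) τ) ^ 2
        + th1 x τ ^ 2 * (th1 (x + ηc) τ * th1 (x - ηc) τ)
          * (th1 y τ * (th1 (y + ηc) τ ^ 3 + th1 (y - ηc) τ ^ 3))
        + th1 x τ ^ 4 * (th1 y τ ^ 2 * (th1 (y + ηc) τ * th1 (y - ηc) τ)) := by
  have hp := th1_three_term x (y + ηc) ηc hτ
  have hm := th1_three_term x (y - ηc) ηc hτ
  rw [th1_add_two_eta, add_sub_cancel_right] at hp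
  rw [th1_sub_two_eta, sub_add_cancel] at hm
  unfold hh
  rw [show x - y + ηc = x - (y - ηc) by ring, show x - y - ηc = x - (y + ηc) by ring,
    show x + y + ηc = x + (y + ηc) by ring, show x + y - ηc = x + (y - ηc) by ring]
  have hpm := congrArg₂ (· * ·) hp hm
  linear_combination hpm

/-- The functions `ϑ₁(y)`, `ϑ₁(y ± η)` lie on a Hesse cubic. -/
theorem th1_hesse (x y : ℂ) {τ : ℂ} (hτ : 0 < τ.im) :
    (th1 y τ * (th1 (y + ηc) τ ^ 3 + th1 (y - ηc) τ ^ 3) - th1 y τ ^ 4)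
        * (th1 x τ ^ 2 * (th1 (x + ηc) τ * th1 (x - ηc) τ))
      = (th1 x τ * (th1 (x + ηc) τ ^ 3 + th1 (x - ηc) τ ^ 3) - th1 x τ ^ 4)
        * (th1 y τ ^ 2 * (th1 (y + ηc) τ * th1 (y - ηc) τ)) := by
  have h1 := th1_eta_pow_four_mul_hh x y hτ
  have h2 := th1_eta_pow_four_mul_hh y x hτ
  rw [hh_comm] at h1
  linear_combination h2 - h1


theorem th1_half_pi_add_eta_mul (τ : ℂ) (hτ : 0 < τ.im) :
    th1 (Real.pi / 2 + ηc) τ * th1 ηc τ = th1 ηc (2 * τ) * th4 0 (2 * τ) := by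
  have h := th1_add_half_pi_mul_th1 ηc 0 hτ
  have h0 : th1 0 (2 * τ) = 0 := by
    have := th1_neg 0 (2 * τ)
    rw [neg_zero] at this
    exact self_eq_neg.1 this
  rwa [add_zero, sub_zero, mul_zero, h0, mul_zero, sub_zero, th1_two_eta,
    add_comm ηc] at h

theorem th1_half_pi_mul (τ : ℂ) (hτ : 0 < τ.im) :
    th1 (Real.pi / 2) τ * th1 ηc τ = 2 * (th1 ηc (2 * τ) * th4 ηc (2 * τ)) := by
  have h := th1_add_half_pi_mul_th1 ηc (-ηc) hτ
  rw [add_neg_cancel, zero_add, sub_neg_eq_add, ← two_mul, mul_neg, th1_neg, th4_neg,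
    th1_two_eta, th1_two_eta, th4_two_eta] at h
  rw [h]
  ring

theorem th1_half_pi_ne_zero {τ : ℂ} (hτ : 0 < τ.im) (hη : th1 ηc τ ≠ 0)
    (h4 : th4 ηc (2 * τ) ≠ 0) : th1 (Real.pi / 2) τ ≠ 0 := by
  intro h
  have h1 := th1_half_pi_mul τ hτ
  have h2 := th1_half_pi_add_eta_mul τ hτ
  rw [h, zero_mul, eq_comm, mul_eq_zero, mul_eq_zero] at h1
  have hS : th1 ηc (2 * τ) = 0 := by simpa [h4] using h1
  rw [hS, zero_mul, mul_eq_zero] at h2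
  have ht : th1 (Real.pi / 2 + ηc) τ = 0 := h2.resolve_right hη
  have h3 := th1_three_term (ηc - Real.pi / 2) ηc (Real.pi / 2) hτ
  have e : th1 (ηc - Real.pi / 2 - Real.pi / 2) τ = -th1 ηc τ := by
    rw [← neg_inj, neg_neg, ← th1_add_pi]
    congr 1
    ring
  rw [h, add_comm ηc (Real.pi / 2 : ℂ), ht, sub_add_cancel, e] at h3
  refine pow_ne_zero 4 hη ?_
  linear_combination h3

/-- `𝕙(x,y)` at `η = π/3` as a polynomial in `w(x)`, `w(y)`. -/
theorem hh_eq_hpol {τ : ℂ} (hτ : 0 < τ.im) (hη : th1 ηc τ ≠ 0)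
    (h0 : th4 0 (2 * τ) ≠ 0) (h4 : th4 ηc (2 * τ) ≠ 0) {x y : ℂ}
    (hx : th1 (x + ηc) τ * th1 (x - ηc) τ ≠ 0) (hy : th1 (y + ηc) τ * th1 (y - ηc) τ ≠ 0) :
    hh τ x y = (th1 ηc τ ^ 4)⁻¹
      * ((th1 (x + ηc) τ * th1 (x - ηc) τ) ^ 2 * (th1 (y + ηc) τ * th1 (y - ηc) τ) ^ 2)
      * hpol (zet τ) (wfun τ x) (wfun τ y) := by
  have h2τ : 0 < (2 * τ).im := by simpa using hτ
  have hπ := th1_half_pi_ne_zero hτ hη h4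
  have h1 := th1_half_pi_mul τ hτ
  have h2 := th1_half_pi_add_eta_mul τ hτ
  have hS : th1 ηc (2 * τ) ≠ 0 := by
    rintro h
    rw [h, zero_mul, mul_zero, mul_eq_zero] at h1
    exact h1.elim hπ hη
  have hK := th4_pow_four_sub_th1_pow_four ηc h2τ
  rw [th4_two_eta] at hK
  have hH := th1_hesse (Real.pi / 2) y hτ
  rw [th1_half_pi_sub] at hH
  have hexp := th1_eta_pow_four_mul_hh x y hτ
  have hwx : wfun τ x = th4 ηc (2 * τ) / th4 0 (2 * τ)
      * (th1 x τ ^ 2 / (th1 (x + ηc) τ * th1 (x - ηc) τ)) := by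
    unfold wfun
    rw [mul_comm (th1 (x + ηc) τ), mul_div_assoc]
  have hwy : wfun τ y = th4 ηc (2 * τ) / th4 0 (2 * τ)
      * (th1 y τ ^ 2 / (th1 (y + ηc) τ * th1 (y - ηc) τ)) := by
    unfold wfun
    rw [mul_comm (th1 (y + ηc) τ), mul_div_assoc]
  set A := th4 ηc (2 * τ) / th4 0 (2 * τ) with hA
  have hA0 : A ≠ 0 := div_ne_zero h4 h0
  have hζ : zet τ ^ 2 = 1 - 1 / A ^ 3 := by
    unfold zet
    rw [hA]
    field_simp
    linear_combination -hK
  generalize th1 (Real.pi / 2 + ηc) τ = t at *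
  have htA : th1 (Real.pi / 2) τ = 2 * A * t := by
    rw [hA]
    field_simp
    refine mul_right_cancel₀ hη (mul_right_cancel₀ hS ?_)
    linear_combination (th4 0 (2 * τ) * th1 ηc (2 * τ)) * h1
      - (2 * th4 ηc (2 * τ) * th1 ηc (2 * τ)) * h2
  have ht : t ≠ 0 := by
    intro h
    rw [h, mul_zero] at htA
    exact hπ htA
  rw [htA] at hH
  clear_value A
  generalize th1 (x + ηc) τ * th1 (x - ηc) τ = gx at *
  have hH' : th1 y τ * (th1 (y + ηc) τ ^ 3 + th1 (y - ηc) τ ^ 3) = th1 y τ ^ 4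
      + (A⁻¹ - 4 * A ^ 2) * (th1 y τ ^ 2 * (th1 (y + ηc) τ * th1 (y - ηc) τ)) := by
    have : 4 * A ^ 2 * t ^ 4 ≠ 0 := by simp [hA0, ht]
    refine mul_left_cancel₀ this ?_
    linear_combination hH - 4 * A * t ^ 4 * th1 y τ ^ 2 * th1 (y + ηc) τ * th1 (y - ηc) τ
      * mul_inv_cancel₀ hA0
  rw [hH'] at hexp
  generalize th1 (y + ηc) τ * th1 (y - ηc) τ = gy at *
  rw [← mul_right_inj' (pow_ne_zero 4 hη), hexp, hpol, hζ, hwx, hwy]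
  field_simp
  ring

theorem wfun_sub_wfun {τ : ℂ} (hτ : 0 < τ.im) {x y : ℂ}
    (hx : th1 (x + ηc) τ * th1 (x - ηc) τ ≠ 0) (hy : th1 (y + ηc) τ * th1 (y - ηc) τ ≠ 0) :
    (wfun τ x - wfun τ y)
        * ((th1 (y + ηc) τ * th1 (y - ηc) τ) * (th1 (x + ηc) τ * th1 (x - ηc) τ))
      = -(th4 ηc (2 * τ) / th4 0 (2 * τ) * th1 ηc τ ^ 2)
        * (th1 (x - y) τ * th1 (x + y) τ) := by
  have h := th1_three_term x y ηc hτ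
  unfold wfun
  rw [mul_comm (th1 (x - ηc) τ), mul_comm (th1 (y - ηc) τ)]
  generalize th1 (x + ηc) τ * th1 (x - ηc) τ = gx at *
  generalize th1 (y + ηc) τ * th1 (y - ηc) τ = gy at *
  generalize th4 ηc (2 * τ) / th4 0 (2 * τ) = A
  field_simp
  linear_combination A * h

/-- A product over pairs `i < j` of a function split over both indices. -/
theorem prod_prod_ite_lt_mul {k : ℕ} (g : Fin k → ℂ) :
    (∏ i, ∏ j, if i < j then g i * g j else 1) = ∏ i, g i ^ (k - 1) := by
  have h1 : (∏ i, ∏ j, if i < j then g i * g j else 1)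
      = (∏ i, ∏ j, if i < j then g i else 1) * ∏ i, ∏ j, if i < j then g j else 1 := by
    rw [← Finset.prod_mul_distrib]
    refine Finset.prod_congr rfl fun i _ => ?_
    rw [← Finset.prod_mul_distrib]
    refine Finset.prod_congr rfl fun j _ => ?_
    split_ifs <;> simp
  rw [h1, Finset.prod_comm (f := fun i j => if i < j then g j else 1),
    ← Finset.prod_mul_distrib]
  refine Finset.prod_congr rfl fun i _ => ?_
  rw [← Finset.prod_mul_distrib]
  have h2 : ∀ j ∈ Finset.univ.erase i,
      (if i < j then g i else 1) * (if j < i then g i else 1) = g i := by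
    intro j hj
    rcases lt_or_gt_of_ne (Finset.ne_of_mem_erase hj) with h | h <;>
      simp [h, h.not_gt]
  rw [← Finset.mul_prod_erase _ _ (Finset.mem_univ i), Finset.prod_congr rfl h2]
  simp [Finset.card_erase_of_mem]

theorem prod_prod_ite_lt_const_mul_self (k : ℕ) (c : ℂ) :
    (∏ i : Fin k, ∏ j : Fin k, if i < j then c else 1)
        * (∏ i : Fin k, ∏ j : Fin k, if i < j then c else 1) = c ^ (k * (k - 1)) := by
  have h := prod_prod_ite_lt_mul fun _ : Fin k => c
  rw [Finset.prod_const, Finset.card_univ, Fintype.card_fin, ← pow_mul, mul_comm (k - 1)] at h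
  rw [← h, ← Finset.prod_mul_distrib]
  refine Finset.prod_congr rfl fun i _ => ?_
  rw [← Finset.prod_mul_distrib]
  refine Finset.prod_congr rfl fun j _ => ?_
  split_ifs <;> simp

theorem vdm_wfun_mul {τ : ℂ} (hτ : 0 < τ.im) {k : ℕ} (y : Fin k → ℂ)
    (hy : ∀ i, th1 (y i + ηc) τ * th1 (y i - ηc) τ ≠ 0) :
    vdm (fun i => wfun τ (y i)) * ∏ i, (th1 (y i + ηc) τ * th1 (y i - ηc) τ) ^ (k - 1)
      = (∏ i : Fin k, ∏ j : Fin k,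
          if i < j then -(th4 ηc (2 * τ) / th4 0 (2 * τ) * th1 ηc τ ^ 2) else 1)
        * vdTheta τ y := by
  unfold vdm vdTheta
  rw [← prod_prod_ite_lt_mul, ← Finset.prod_mul_distrib, ← Finset.prod_mul_distrib]
  refine Finset.prod_congr rfl fun i _ => ?_
  rw [← Finset.prod_mul_distrib, ← Finset.prod_mul_distrib]
  refine Finset.prod_congr rfl fun j _ => ?_
  split_ifs
  · exact wfun_sub_wfun hτ (hy j) (hy i)
  · rfl

theorem prod_firstHalf_mul_prod_secondHalf {k : ℕ} (x : Fin (2 * k) → ℂ) (F : ℂ → ℂ) :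
    ∏ i, F (x i) = (∏ i, F (firstHalf x i)) * ∏ i, F (secondHalf x i) := by
  rw [← (finCongr (two_mul k)).symm.prod_comp, Fin.prod_univ_add]
  rfl

/-- Effect of a rescaling `u i * v j` of the entries on the determinant of inverses. -/
theorem prod_mul_det_inv_rescale {k : ℕ} (c : ℂ) (u v : Fin k → ℂ)
    (h : Fin k → Fin k → ℂ) (hc : c ≠ 0) (hu : ∀ i, u i ≠ 0) (hv : ∀ i, v i ≠ 0) :
    (∏ i, ∏ j, c * (u i * v j) * h i j)
        * Matrix.det (Matrix.of fun i j => (c * (u i * v j) * h i j)⁻¹)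
      = c ^ (k * (k - 1)) * ((∏ i, u i ^ (k - 1)) * ∏ j, v j ^ (k - 1))
        * ((∏ i, ∏ j, h i j) * Matrix.det (Matrix.of fun i j => (h i j)⁻¹)) := by
  have hdet : Matrix.det (Matrix.of fun i j => (c * (u i * v j) * h i j)⁻¹)
      = (∏ i, (c * u i)⁻¹) * ((∏ j, (v j)⁻¹) * Matrix.det (Matrix.of fun i j => (h i j)⁻¹)) := by
    rw [← Matrix.det_mul_row, ← Matrix.det_mul_column]
    congr 1
    ext i j
    simp only [Matrix.of_apply, mul_inv]
    ring
  have hprod : (∏ i, ∏ j, c * (u i * v j) * h i j)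
      = (∏ i, (c * u i) ^ k) * (∏ j, v j ^ k) * ∏ i, ∏ j, h i j := by
    have hv' : (∏ j, v j ^ k) = ∏ _i : Fin k, ∏ j, v j := by
      rw [Finset.prod_comm]; simp
    rw [hv', ← Finset.prod_mul_distrib, ← Finset.prod_mul_distrib]
    refine Finset.prod_congr rfl fun i _ => ?_
    have hi : (c * u i) ^ k = ∏ _j : Fin k, c * u i := by simp
    rw [hi, ← Finset.prod_mul_distrib, ← Finset.prod_mul_distrib]
    refine Finset.prod_congr rfl fun j _ => ?_
    ring
  have hpow : ∀ {a : ℂ}, a ≠ 0 → Fin k → a ^ k * a⁻¹ = a ^ (k - 1) := fun ha i => by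
    rw [pow_sub₀ _ ha (Nat.one_le_of_lt i.2), pow_one]
  have hcu : (∏ i, (c * u i) ^ k) * ∏ i, (c * u i)⁻¹
      = c ^ (k * (k - 1)) * ∏ i, u i ^ (k - 1) := by
    have hck : c ^ (k * (k - 1)) = ∏ _i : Fin k, c ^ (k - 1) := by
      simp [← pow_mul, mul_comm]
    rw [hck, ← Finset.prod_mul_distrib, ← Finset.prod_mul_distrib]
    refine Finset.prod_congr rfl fun i _ => ?_
    rw [← mul_pow, hpow (mul_ne_zero hc (hu i)) i]
  have hvv : (∏ j, v j ^ k) * ∏ j, (v j)⁻¹ = ∏ j, v j ^ (k - 1) := by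
    rw [← Finset.prod_mul_distrib]
    exact Finset.prod_congr rfl fun i _ => hpow (hv i) i
  rw [hprod, hdet, ← hvv]
  linear_combination (∏ j, v j ^ k) * (∏ j, (v j)⁻¹) * (∏ i, ∏ j, h i j)
    * Matrix.det (Matrix.of fun i j => (h i j)⁻¹) * hcu

theorem stmt1 (τ : ℂ) (hτ : 0 < τ.im) (k : ℕ) (hk : 1 ≤ k) (x : Fin (2*k) → ℂ)
    (hx : tsuDefined τ k x)
    (hw : ∀ i : Fin (2*k), th1 (x i - ηc) τ ≠ 0 ∧ th1 (x i + ηc) τ ≠ 0)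
    (hH : HratioDefined (zet τ) k (fun i => wfun τ (x i))) :
    tsuchiya τ k x
      = (th4 ηc (2*τ) / (th1 ηc τ ^ 2 * th4 0 (2*τ))) ^ (k*(k-1))
        * (∏ i : Fin (2*k), (th1 (x i + ηc) τ * th1 (x i - ηc) τ) ^ (k-1))
        * Hratio (zet τ) k (fun i => wfun τ (x i)) := by
  have hg : ∀ i, th1 (x i + ηc) τ * th1 (x i - ηc) τ ≠ 0 := fun i =>
    mul_ne_zero (hw i).2 (hw i).1
  rcases hk.eq_or_lt with rfl | hk2
  · have h1 := hx.2.2 0 0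
    have h2 := hH.2.2 0 0
    simp [tsuchiya, Hratio, vdm, vdTheta, h1, h2]
  set a := firstHalf x with ha
  set b := secondHalf x with hb
  have hga : ∀ i, th1 (a i + ηc) τ * th1 (a i - ηc) τ ≠ 0 := fun i => hg _
  have hgb : ∀ i, th1 (b i + ηc) τ * th1 (b i - ηc) τ ≠ 0 := fun i => hg _
  -- Two distinct values of `w` force the constants to be nonzero.
  have hne : (⟨1, hk2⟩ : Fin k) ≠ ⟨0, hk⟩ := by simp
  have hsub := wfun_sub_wfun hτ (hga ⟨1, hk2⟩) (hga ⟨0, hk⟩)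
  have hA : th4 ηc (2 * τ) / th4 0 (2 * τ) * th1 ηc τ ^ 2 ≠ 0 := by
    intro h
    rw [h, neg_zero, zero_mul] at hsub
    exact mul_ne_zero (sub_ne_zero.2 (hH.1 _ _ hne)) (mul_ne_zero (hga _) (hga _)) hsub
  have hη : th1 ηc τ ≠ 0 := fun h => hA (by rw [h]; ring)
  have h0 : th4 0 (2 * τ) ≠ 0 := fun h => hA (by rw [h]; simp)
  have h4 : th4 ηc (2 * τ) ≠ 0 := fun h => hA (by rw [h]; simp)
  have hentry : ∀ i j, hh τ (a i) (b j) = (th1 ηc τ ^ 4)⁻¹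
      * ((th1 (a i + ηc) τ * th1 (a i - ηc) τ) ^ 2 * (th1 (b j + ηc) τ * th1 (b j - ηc) τ) ^ 2)
      * hpol (zet τ) (wfun τ (a i)) (wfun τ (b j)) := fun i j =>
    hh_eq_hpol hτ hη h0 h4 (hga i) (hgb j)
  have hva := vdm_wfun_mul hτ a hga
  have hvb := vdm_wfun_mul hτ b hgb
  have hsq := prod_prod_ite_lt_const_mul_self k
    (-(th4 ηc (2 * τ) / th4 0 (2 * τ) * th1 ηc τ ^ 2))
  have hkk : Even (k * (k - 1)) := Nat.even_mul_pred_self k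
  rw [hkk.neg_pow] at hsq
  have hresc := prod_mul_det_inv_rescale (th1 ηc τ ^ 4)⁻¹
    (fun i => (th1 (a i + ηc) τ * th1 (a i - ηc) τ) ^ 2)
    (fun j => (th1 (b j + ηc) τ * th1 (b j - ηc) τ) ^ 2)
    (fun i j => hpol (zet τ) (wfun τ (a i)) (wfun τ (b j)))
    (inv_ne_zero (pow_ne_zero 4 hη)) (fun i => pow_ne_zero 2 (hga i))
    (fun j => pow_ne_zero 2 (hgb j))
  have hsq_pow : ∀ y : Fin k → ℂ, (∏ i, (y i ^ 2) ^ (k - 1)) = (∏ i, y i ^ (k - 1)) ^ 2 :=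
    fun y => by
      rw [← Finset.prod_pow]
      exact Finset.prod_congr rfl fun i _ => by rw [← pow_mul, ← pow_mul, mul_comm]
  rw [hsq_pow fun i => th1 (a i + ηc) τ * th1 (a i - ηc) τ,
    hsq_pow fun j => th1 (b j + ηc) τ * th1 (b j - ηc) τ] at hresc
  have hVa : vdm (fun i => wfun τ (a i)) ≠ 0 := by
    refine Finset.prod_ne_zero_iff.2 fun i _ => Finset.prod_ne_zero_iff.2 fun j _ => ?_
    split_ifs with hij
    · exact sub_ne_zero.2 (hH.1 _ _ hij.ne')
    · exact one_ne_zero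
  have hVb : vdm (fun i => wfun τ (b i)) ≠ 0 := by
    refine Finset.prod_ne_zero_iff.2 fun i _ => Finset.prod_ne_zero_iff.2 fun j _ => ?_
    split_ifs with hij
    · exact sub_ne_zero.2 (hH.2.1 _ _ hij.ne')
    · exact one_ne_zero
  have hGa : (∏ i, (th1 (a i + ηc) τ * th1 (a i - ηc) τ) ^ (k - 1)) ≠ 0 :=
    Finset.prod_ne_zero_iff.2 fun i _ => pow_ne_zero _ (hga i)
  have hGb : (∏ i, (th1 (b i + ηc) τ * th1 (b i - ηc) τ) ^ (k - 1)) ≠ 0 :=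
    Finset.prod_ne_zero_iff.2 fun i _ => pow_ne_zero _ (hgb i)
  have hconst : (th4 ηc (2 * τ) / th4 0 (2 * τ) * th1 ηc τ ^ 2) ^ (k * (k - 1))
      * (th1 ηc τ ^ 4)⁻¹ ^ (k * (k - 1))
      = (th4 ηc (2 * τ) / (th1 ηc τ ^ 2 * th4 0 (2 * τ))) ^ (k * (k - 1)) := by
    rw [← mul_pow]
    congr 1
    field_simp
  have hfa : firstHalf (fun i => wfun τ (x i)) = fun i => wfun τ (a i) := rfl
  have hfb : secondHalf (fun i => wfun τ (x i)) = fun i => wfun τ (b i) := rfl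
  have hD : vdTheta τ a * vdTheta τ b ≠ 0 := by
    refine mul_ne_zero (right_ne_zero_of_mul (hva ▸ mul_ne_zero hVa hGa))
      (right_ne_zero_of_mul (hvb ▸ mul_ne_zero hVb hGb))
  rw [prod_firstHalf_mul_prod_secondHalf x
    (fun z => (th1 (z + ηc) τ * th1 (z - ηc) τ) ^ (k - 1)), ← hconst, ← hsq]
  generalize (∏ i : Fin k, ∏ j : Fin k, if i < j then
    -(th4 ηc (2 * τ) / th4 0 (2 * τ) * th1 ηc τ ^ 2) else 1) = E at hva hvb ⊢
  unfold tsuchiya Hratio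
  rw [hfa, hfb, ← ha, ← hb]
  simp only [hentry]
  rw [div_mul_eq_mul_div, div_mul_eq_mul_div, hresc, ← mul_div_assoc,
    div_eq_div_iff hD (mul_ne_zero hVa hVb)]
  generalize (th1 ηc τ ^ 4)⁻¹ ^ (k * (k - 1)) = c
  generalize (∏ i, ∏ j, hpol (zet τ) (wfun τ (a i)) (wfun τ (b j)))
    * Matrix.det (Matrix.of fun i j => (hpol (zet τ) (wfun τ (a i)) (wfun τ (b j)))⁻¹) = M
  generalize (∏ i, (th1 (a i + ηc) τ * th1 (a i - ηc) τ) ^ (k - 1)) = Ga at hva ⊢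
  generalize (∏ i, (th1 (b i + ηc) τ * th1 (b i - ηc) τ) ^ (k - 1)) = Gb at hvb ⊢
  have hvv := congrArg₂ (· * ·) hva hvb
  linear_combination (c * Ga * Gb * M) * hvv

end
end

section
/- For each integer k ≥ 1 and every value of the parameter ζ, the polynomial H_{2k}(w₁,…,w_{2k}) has degree k−1 in each of its 2k variables, and the coefficient of w^{k−1} in the polynomial w ↦ H_{2k}(w₁,…,w_{2k−2}, w, 0) equals (ζ²−1)^{k−1} · H_{2(k−1)}(w₁,…,w_{2(k−1)}); equivalently, lim_{w→∞} w^{−(k−1)} H_{2k}(w₁,…,w_{2k−2}, w, 0) = (ζ²−1)^{k−1} H_{2(k−1)}(w₁,…,w_{2(k−1)}). -/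
noncomputable section

open Complex
open scoped BigOperators

open Matrix in
theorem vdm_eq_det {k : ℕ} (y : Fin k → ℂ) : vdm y = (vandermonde y).det := by
  rw [det_vandermonde, vdm]
  refine Finset.prod_congr rfl fun i _ => ?_
  rw [← Finset.prod_filter]
  congr 1
  ext j
  simp

theorem vdm_comp_perm {k : ℕ} (y : Fin k → ℂ) (σ : Equiv.Perm (Fin k)) :
    vdm (y ∘ σ) = (Equiv.Perm.sign σ : ℂ) * vdm y := by
  rw [vdm_eq_det, vdm_eq_det, ← Matrix.det_permute]
  rfl

theorem vdm_snoc {k : ℕ} (y : Fin k → ℂ) (u : ℂ) :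
    vdm (Fin.snoc y u : Fin (k + 1) → ℂ) = vdm y * ∏ i, (u - y i) := by
  simp [vdm, Fin.prod_univ_castSucc, Finset.prod_mul_distrib, Fin.castSucc_lt_last,
    fun i : Fin k => (Fin.castSucc_lt_last i).not_gt]

theorem hpol_comm (ζ x y : ℂ) : hpol ζ x y = hpol ζ y x := by
  unfold hpol; ring

/-- The determinant ratio defining `H_{2k}`, as a function of the two halves of its variables. -/
def splitRatio (ζ : ℂ) {k : ℕ} (x y : Fin k → ℂ) : ℂ :=
  (∏ i, ∏ j, hpol ζ (x i) (y j)) / (vdm x * vdm y)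
    * Matrix.det (Matrix.of fun i j => (hpol ζ (x i) (y j))⁻¹)

theorem hratio_eq_splitRatio (ζ : ℂ) {k : ℕ} (w : Fin (2 * k) → ℂ) :
    Hratio ζ k w = splitRatio ζ (firstHalf w) (secondHalf w) := rfl

theorem splitRatio_comm (ζ : ℂ) {k : ℕ} (x y : Fin k → ℂ) :
    splitRatio ζ x y = splitRatio ζ y x := by
  unfold splitRatio
  rw [Finset.prod_comm, mul_comm (vdm x), ← Matrix.det_transpose]
  simp only [hpol_comm ζ (x _)]
  rfl

theorem splitRatio_comp_right (ζ : ℂ) {k : ℕ} (x y : Fin k → ℂ) (σ : Equiv.Perm (Fin k)) :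
    splitRatio ζ x (y ∘ σ) = splitRatio ζ x y := by
  have hdet : Matrix.det (Matrix.of fun i j => (hpol ζ (x i) ((y ∘ σ) j))⁻¹)
      = (Equiv.Perm.sign σ : ℂ) * Matrix.det (Matrix.of fun i j => (hpol ζ (x i) (y j))⁻¹) := by
    rw [← Matrix.det_permute']
    rfl
  have hprod : ∏ i, ∏ j, hpol ζ (x i) ((y ∘ σ) j) = ∏ i, ∏ j, hpol ζ (x i) (y j) :=
    Finset.prod_congr rfl fun i _ => Equiv.prod_comp σ fun j => hpol ζ (x i) (y j)
  unfold splitRatio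
  rw [hdet, hprod, vdm_comp_perm]
  rcases Int.units_eq_one_or (Equiv.Perm.sign σ) with h | h <;> simp [h, div_neg]

theorem splitRatio_comp_left (ζ : ℂ) {k : ℕ} (x y : Fin k → ℂ) (σ : Equiv.Perm (Fin k)) :
    splitRatio ζ (x ∘ σ) y = splitRatio ζ x y := by
  rw [splitRatio_comm, splitRatio_comp_right, splitRatio_comm]

/-- The polynomial `H_4`, up to the order of its variables. -/
def quadH (ζ x y u v : ℂ) : ℂ :=
  (3 + ζ ^ 2) - (1 - ζ ^ 2) * (x + y + u + v) + (1 - ζ ^ 2) ^ 2 * x * y * u * v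

theorem quadH_swap (ζ x y u v : ℂ) : quadH ζ x y u v = quadH ζ x y v u := by
  unfold quadH; ring

theorem hpol_mul_sub_hpol_mul (ζ x y u v : ℂ) :
    hpol ζ x v * hpol ζ u y - hpol ζ x y * hpol ζ u v
      = (u - x) * (v - y) * quadH ζ x y u v := by
  unfold hpol quadH; ring

/-- Expansion of a determinant with respect to an invertible bottom right entry. -/
theorem det_eq_mul_det_schur {k : ℕ} (M : Matrix (Fin (k + 1)) (Fin (k + 1)) ℂ)
    (h : M (Fin.last k) (Fin.last k) ≠ 0) :
    M.det = M (Fin.last k) (Fin.last k) * Matrix.det (Matrix.of fun i j : Fin k =>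
      M i.castSucc j.castSucc - M i.castSucc (Fin.last k) * (M (Fin.last k) (Fin.last k))⁻¹
        * M (Fin.last k) j.castSucc) := by
  let D : Matrix (Fin 1) (Fin 1) ℂ := Matrix.of fun _ _ => M (Fin.last k) (Fin.last k)
  let E : Matrix (Fin 1) (Fin 1) ℂ := Matrix.of fun _ _ => (M (Fin.last k) (Fin.last k))⁻¹
  have hED : E * D = 1 := by
    ext i j
    simp [E, D, Matrix.mul_apply, h, Matrix.one_apply, Subsingleton.elim i j]
  have hDE : D * E = 1 := by
    ext i j
    simp [E, D, Matrix.mul_apply, h, Matrix.one_apply, Subsingleton.elim i j]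
  let _ : Invertible D := ⟨E, hED, hDE⟩
  have hM : M.submatrix (finSumFinEquiv : Fin k ⊕ Fin 1 ≃ Fin (k + 1)) finSumFinEquiv
      = Matrix.fromBlocks (Matrix.of fun i j : Fin k => M i.castSucc j.castSucc)
        (Matrix.of fun i _ => M i.castSucc (Fin.last k))
        (Matrix.of fun _ j => M (Fin.last k) j.castSucc) D := by
    ext (i | i) (j | j)
    · rfl
    · rw [Subsingleton.elim j 0]; rfl
    · rw [Subsingleton.elim i 0]; rfl
    · rw [Subsingleton.elim i 0, Subsingleton.elim j 0]; rfl
  rw [← Matrix.det_submatrix_equiv_self finSumFinEquiv M, hM, Matrix.det_fromBlocks₂₂]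
  congr 1
  · simp [D]
  · congr 1
    ext i j
    simp [Matrix.mul_apply, D]

/-- The values `a` and `b` are distinct and `h(a,b)` does not vanish. -/
def Separated (ζ a b : ℂ) : Prop := a ≠ b ∧ hpol ζ a b ≠ 0

theorem Separated.symm {ζ a b : ℂ} (h : Separated ζ a b) : Separated ζ b a :=
  ⟨h.1.symm, hpol_comm ζ a b ▸ h.2⟩

/-- Condensation of the determinant ratio with respect to the last variable of each half. -/
theorem splitRatio_snoc (ζ : ℂ) {k : ℕ} (x y : Fin k → ℂ) (u v : ℂ)
    (hux : ∀ i, Separated ζ u (x i)) (hvy : ∀ j, Separated ζ v (y j))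
    (hxy : ∀ i j, Separated ζ (x i) (y j)) (hvx : ∀ i, Separated ζ v (x i))
    (huy : ∀ j, Separated ζ u (y j)) (huv : Separated ζ u v) :
    splitRatio ζ (Fin.snoc x u : Fin (k + 1) → ℂ) (Fin.snoc y v)
      = (∏ i, ∏ j, hpol ζ (x i) (y j)) / (vdm x * vdm y)
        * Matrix.det (Matrix.of fun i j => quadH ζ (x i) (y j) u v * (hpol ζ (x i) (y j))⁻¹) := by
  have hprod : ∏ i, ∏ j, hpol ζ ((Fin.snoc x u : Fin (k + 1) → ℂ) i)
        ((Fin.snoc y v : Fin (k + 1) → ℂ) j)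
      = (∏ i, ∏ j, hpol ζ (x i) (y j)) * (∏ i, hpol ζ (x i) v)
        * ((∏ j, hpol ζ u (y j)) * hpol ζ u v) := by
    simp only [Fin.prod_univ_castSucc, Fin.snoc_castSucc, Fin.snoc_last, Finset.prod_mul_distrib]
    ring
  have hdet : Matrix.det (Matrix.of fun i j => (hpol ζ ((Fin.snoc x u : Fin (k + 1) → ℂ) i)
        ((Fin.snoc y v : Fin (k + 1) → ℂ) j))⁻¹)
      = (hpol ζ u v)⁻¹ * ((∏ i, ((u - x i) * (hpol ζ (x i) v)⁻¹))
        * ((∏ j, ((v - y j) * (hpol ζ u (y j))⁻¹)) * Matrix.det (Matrix.of fun i j =>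
          quadH ζ (x i) (y j) u v * (hpol ζ (x i) (y j))⁻¹))) := by
    rw [det_eq_mul_det_schur _ (by simpa using huv.2), ← Matrix.det_mul_row, ← Matrix.det_mul_column]
    congr 1
    · simp
    · congr 1
      ext i j
      have h := hpol_mul_sub_hpol_mul ζ (x i) (y j) u v
      have h1 := (hxy i j).2
      have h2 := (hvx i).symm.2
      have h3 := (huy j).2
      simp only [Matrix.of_apply, Fin.snoc_castSucc, Fin.snoc_last, inv_inv]
      field_simp
      linear_combination h
  have e1 : ∏ i, (u - x i) ≠ 0 := Finset.prod_ne_zero_iff.2 fun i _ => sub_ne_zero.2 (hux i).1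
  have e2 : ∏ j, (v - y j) ≠ 0 := Finset.prod_ne_zero_iff.2 fun j _ => sub_ne_zero.2 (hvy j).1
  have e3 : ∏ i, hpol ζ (x i) v ≠ 0 := Finset.prod_ne_zero_iff.2 fun i _ => (hvx i).symm.2
  have e5 := huv.2
  have e4 : ∏ j, hpol ζ u (y j) ≠ 0 := Finset.prod_ne_zero_iff.2 fun j _ => (huy j).2
  unfold splitRatio
  rw [hprod, hdet, vdm_snoc, vdm_snoc]
  simp only [Finset.prod_mul_distrib, Finset.prod_inv_distrib]
  rw [div_mul_eq_mul_div, div_mul_eq_mul_div, mul_mul_mul_comm (vdm x), mul_comm (vdm x * vdm y),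
    ← div_div]
  congr 1
  field_simp

theorem splitRatio_snoc_swap (ζ : ℂ) {k : ℕ} (x y : Fin k → ℂ) (u v : ℂ)
    (hux : ∀ i, Separated ζ u (x i)) (hvy : ∀ j, Separated ζ v (y j))
    (hxy : ∀ i j, Separated ζ (x i) (y j)) (hvx : ∀ i, Separated ζ v (x i))
    (huy : ∀ j, Separated ζ u (y j)) (huv : Separated ζ u v) :
    splitRatio ζ (Fin.snoc x u : Fin (k + 1) → ℂ) (Fin.snoc y v)
      = splitRatio ζ (Fin.snoc x v : Fin (k + 1) → ℂ) (Fin.snoc y u) := by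
  rw [splitRatio_snoc ζ x y u v hux hvy hxy hvx huy huv,
    splitRatio_snoc ζ x y v u hvx huy hxy hux hvy huv.symm]
  simp only [quadH_swap ζ _ _ u v]

theorem snoc_snoc_swap {m : ℕ} (c : Fin m → ℂ) (a b : ℂ) :
    (Fin.snoc (Fin.snoc c a : Fin (m + 1) → ℂ) b : Fin (m + 2) → ℂ)
      = (Fin.snoc (Fin.snoc c b : Fin (m + 1) → ℂ) a : Fin (m + 2) → ℂ)
        ∘ Equiv.swap (Fin.last m).castSucc (Fin.last (m + 1)) := by
  ext i
  refine Fin.lastCases ?_ (fun i => ?_) i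
  · simp
  · refine Fin.lastCases ?_ (fun i => ?_) i
    · simp
    · rw [Function.comp_apply, Equiv.swap_apply_of_ne_of_ne]
      · simp
      · exact fun h => (Fin.castSucc_lt_last i).ne (Fin.castSucc_injective _ h)
      · exact (Fin.castSucc_lt_last _).ne

/-- Exchange of the last variable of the first half with the last but one of the second half. -/
theorem splitRatio_snoc_snoc_swap (ζ : ℂ) {m : ℕ} (x : Fin (m + 1) → ℂ) (c : Fin m → ℂ)
    (u z t : ℂ) (hux : ∀ i, Separated ζ u (x i)) (hzx : ∀ i, Separated ζ z (x i))
    (hxt : ∀ i, Separated ζ (x i) t) (hxc : ∀ i j, Separated ζ (x i) (c j))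
    (huc : ∀ j, Separated ζ u (c j)) (hzc : ∀ j, Separated ζ z (c j))
    (huz : Separated ζ u z) (hut : Separated ζ u t) (hzt : Separated ζ z t) :
    splitRatio ζ (Fin.snoc x u : Fin (m + 2) → ℂ) (Fin.snoc (Fin.snoc c z : Fin (m + 1) → ℂ) t)
      = splitRatio ζ (Fin.snoc x z : Fin (m + 2) → ℂ)
        (Fin.snoc (Fin.snoc c u : Fin (m + 1) → ℂ) t) := by
  rw [snoc_snoc_swap c z t, splitRatio_comp_right, snoc_snoc_swap c u t, splitRatio_comp_right]
  refine splitRatio_snoc_swap ζ x _ u z hux ?_ (fun i => ?_) hzx ?_ huz <;>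
    rw [Fin.forall_fin_succ'] <;> simp_all

open Polynomial in
/-- The determinant ratio, as a polynomial in the last variable of the first half. -/
def condensed (ζ : ℂ) {k : ℕ} (x y : Fin k → ℂ) (v : ℂ) : ℂ[X] :=
  C ((∏ i, ∏ j, hpol ζ (x i) (y j)) / (vdm x * vdm y)) * Matrix.det
    ((X : ℂ[X]) • (Matrix.of fun i j =>
        (quadH ζ (x i) (y j) 1 v - quadH ζ (x i) (y j) 0 v) * (hpol ζ (x i) (y j))⁻¹).map C
      + (Matrix.of fun i j => quadH ζ (x i) (y j) 0 v * (hpol ζ (x i) (y j))⁻¹).map C)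

theorem natDegree_condensed_le (ζ : ℂ) {k : ℕ} (x y : Fin k → ℂ) (v : ℂ) :
    (condensed ζ x y v).natDegree ≤ k := by
  refine (Polynomial.natDegree_C_mul_le _ _).trans ?_
  simpa using Polynomial.natDegree_det_X_add_C_le (n := Fin k) (α := ℂ) _ _

theorem coeff_condensed_zero (ζ : ℂ) {k : ℕ} (x y : Fin k → ℂ) :
    (condensed ζ x y 0).coeff k = (ζ ^ 2 - 1) ^ k * splitRatio ζ x y := by
  have h := Polynomial.coeff_det_X_add_C_card (n := Fin k) (α := ℂ)
    (Matrix.of fun i j =>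
        (quadH ζ (x i) (y j) 1 0 - quadH ζ (x i) (y j) 0 0) * (hpol ζ (x i) (y j))⁻¹)
    (Matrix.of fun i j => quadH ζ (x i) (y j) 0 0 * (hpol ζ (x i) (y j))⁻¹)
  have hA : (Matrix.of fun i j =>
        (quadH ζ (x i) (y j) 1 0 - quadH ζ (x i) (y j) 0 0) * (hpol ζ (x i) (y j))⁻¹)
      = (ζ ^ 2 - 1) • Matrix.of fun i j => (hpol ζ (x i) (y j))⁻¹ := by
    ext i j
    simp only [Matrix.of_apply, Matrix.smul_apply, quadH, smul_eq_mul]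
    ring
  rw [Fintype.card_fin] at h
  rw [condensed, Polynomial.coeff_C_mul, h, hA, Matrix.det_smul, Fintype.card_fin, splitRatio]
  ring

theorem splitRatio_snoc_eq_eval (ζ : ℂ) {k : ℕ} (x y : Fin k → ℂ) (u v : ℂ)
    (hux : ∀ i, Separated ζ u (x i)) (hvy : ∀ j, Separated ζ v (y j))
    (hxy : ∀ i j, Separated ζ (x i) (y j)) (hvx : ∀ i, Separated ζ v (x i))
    (huy : ∀ j, Separated ζ u (y j)) (huv : Separated ζ u v) :
    splitRatio ζ (Fin.snoc x u : Fin (k + 1) → ℂ) (Fin.snoc y v)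
      = (condensed ζ x y v).eval u := by
  rw [splitRatio_snoc ζ x y u v hux hvy hxy hvx huy huv, condensed, Polynomial.eval_mul,
    Polynomial.eval_C]
  congr 1
  rw [← Polynomial.coe_evalRingHom, RingHom.map_det]
  congr 1
  ext i j
  simp [quadH]
  ring

/-- The entries of `v` are pairwise separated. -/
def Generic (ζ : ℂ) {ι : Type*} (v : ι → ℂ) : Prop := Pairwise fun a b => Separated ζ (v a) (v b)

theorem Generic.hratioDefined {ζ : ℂ} {k : ℕ} {w : Fin (2 * k) → ℂ} (hw : Generic ζ w) :
    HratioDefined ζ k w := by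
  refine ⟨fun i j hij => (hw ?_).1, fun i j hij => (hw ?_).1, fun i j => (hw ?_).2⟩ <;>
    simp only [ne_eq, Fin.mk.injEq] <;> omega

/-- All but finitely many complex numbers are separated from a given one. -/
theorem eventually_separated (ζ a : ℂ) : ∀ᶠ z in Filter.cofinite, Separated ζ z a := by
  have hp : (Polynomial.C ((1 - ζ ^ 2) * a) * Polynomial.X ^ 2
      + Polynomial.C ((1 - ζ ^ 2) * a ^ 2 - (3 + ζ ^ 2) * a) * Polynomial.X
      + 1 : Polynomial ℂ) ≠ 0 := by
    intro h
    simpa using congrArg (Polynomial.eval 0) h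
  filter_upwards [(Polynomial.finite_setOfPred_isRoot hp).eventually_cofinite_notMem, Filter.eventually_cofinite_ne a] with z hz hza
  refine ⟨hza, fun h => hz ?_⟩
  rw [Polynomial.IsRoot.def]
  simp only [Polynomial.eval_add, Polynomial.eval_mul, Polynomial.eval_C, Polynomial.eval_pow,
    Polynomial.eval_X, Polynomial.eval_one]
  rw [← h, hpol]
  ring

theorem Polynomial.eq_of_eventually_cofinite_eval_eq {P Q : Polynomial ℂ}
    (h : ∀ᶠ z in Filter.cofinite, P.eval z = Q.eval z) : P = Q :=
  Polynomial.eq_of_infinite_eval_eq P Q (Filter.frequently_cofinite_iff_infinite.1 h.frequently)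

/-- A nonzero polynomial whose non-vanishing makes a tuple of nonzero numbers generic. -/
def genericityPoly (ζ : ℂ) (n : ℕ) : MvPolynomial (Fin n) ℂ :=
  (∏ a, MvPolynomial.X a) * ∏ a, ∏ b, if a = b then 1 else
    (MvPolynomial.X a - MvPolynomial.X b)
      * (1 - MvPolynomial.C (3 + ζ ^ 2) * MvPolynomial.X a * MvPolynomial.X b
        + MvPolynomial.C (1 - ζ ^ 2) * MvPolynomial.X a * MvPolynomial.X b
          * (MvPolynomial.X a + MvPolynomial.X b))

theorem genericityPoly_ne_zero (ζ : ℂ) (n : ℕ) : genericityPoly ζ n ≠ 0 := by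
  refine mul_ne_zero (Finset.prod_ne_zero_iff.2 fun a _ => MvPolynomial.X_ne_zero a) <|
    Finset.prod_ne_zero_iff.2 fun a _ => Finset.prod_ne_zero_iff.2 fun b _ => ?_
  split_ifs with hab
  · exact one_ne_zero
  · refine mul_ne_zero (sub_ne_zero.2 fun h => hab (MvPolynomial.X_injective h)) fun h => ?_
    simpa using congrArg (MvPolynomial.eval fun _ => 0) h

theorem ne_zero_and_generic_of_eval_genericityPoly {ζ : ℂ} {n : ℕ} {w : Fin n → ℂ}
    (h : MvPolynomial.eval w (genericityPoly ζ n) ≠ 0) : (∀ a, w a ≠ 0) ∧ Generic ζ w := by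
  rw [genericityPoly, map_mul, mul_ne_zero_iff, map_prod, map_prod, Finset.prod_ne_zero_iff,
    Finset.prod_ne_zero_iff] at h
  refine ⟨fun a => by simpa using h.1 a (Finset.mem_univ a), fun a b hab => ?_⟩
  have h2 := h.2 a (Finset.mem_univ a)
  rw [map_prod, Finset.prod_ne_zero_iff] at h2
  have h3 := h2 b (Finset.mem_univ b)
  rw [if_neg hab, map_mul, mul_ne_zero_iff] at h3
  exact ⟨fun h => h3.1 (by simp [h]), fun h => h3.2 (by simpa [hpol] using h)⟩

/-- Two polynomials that agree at all generic tuples of nonzero numbers are equal. -/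
theorem MvPolynomial.eq_of_eval_eq_of_generic (ζ : ℂ) {n : ℕ} {p q : MvPolynomial (Fin n) ℂ}
    (h : ∀ w, (∀ a, w a ≠ 0) → Generic ζ w → MvPolynomial.eval w p = MvPolynomial.eval w q) :
    p = q := by
  refine mul_right_cancel₀ (genericityPoly_ne_zero ζ n) (MvPolynomial.funext fun w => ?_)
  rw [map_mul, map_mul]
  by_cases hw : MvPolynomial.eval w (genericityPoly ζ n) = 0
  · rw [hw, mul_zero, mul_zero]
  · obtain ⟨h0, hg⟩ := ne_zero_and_generic_of_eval_genericityPoly hw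
    rw [h w h0 hg]

theorem natDegree_le_of_generic (ζ : ℂ) {n : ℕ} (k : ℕ)
    (S : Polynomial (MvPolynomial (Fin n) ℂ))
    (h : ∀ w, (∀ a, w a ≠ 0) → Generic ζ w →
      (S.map (MvPolynomial.eval w)).natDegree ≤ k) : S.natDegree ≤ k := by
  refine Polynomial.natDegree_le_iff_coeff_eq_zero.2 fun N hN =>
    MvPolynomial.eq_of_eval_eq_of_generic ζ fun w h0 hg => ?_
  rw [← Polynomial.coeff_map, map_zero]
  exact Polynomial.natDegree_le_iff_coeff_eq_zero.1 (h w h0 hg) N hN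

theorem eval_map_aeval {σ τ : Type*} (R : MvPolynomial τ ℂ)
    (s : τ → Polynomial (MvPolynomial σ ℂ)) (w : σ → ℂ) (z : ℂ) :
    ((MvPolynomial.aeval s R).map (MvPolynomial.eval w)).eval z
      = MvPolynomial.eval (fun t => ((s t).map (MvPolynomial.eval w)).eval z) R := by
  induction R using MvPolynomial.induction_on with
  | C a => simp [Polynomial.algebraMap_apply, MvPolynomial.algebraMap_eq]
  | add p q hp hq => simp [hp, hq]
  | mul_X p t hp => simp [hp]

/-- As a function of one variable of the first half, the determinant ratio is generically a
polynomial. -/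
theorem exists_eval_eq_splitRatio_update (ζ : ℂ) {k : ℕ} (x y : Fin (k + 1) → ℂ) (i : Fin (k + 1))
    (hy : Generic ζ y) (hxy : ∀ a b, Separated ζ (x a) (y b)) :
    ∃ T : Polynomial ℂ, T.natDegree ≤ k ∧
      ∀ᶠ z in Filter.cofinite, splitRatio ζ (Function.update x i z) y = T.eval z := by
  let σ : Equiv.Perm (Fin (k + 1)) := Equiv.swap i (Fin.last k)
  refine ⟨condensed ζ (Fin.init (x ∘ σ)) (Fin.init y) (y (Fin.last k)),
    natDegree_condensed_le _ _ _ _, ?_⟩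
  filter_upwards [Filter.eventually_all.2 fun a => eventually_separated ζ (x a),
    Filter.eventually_all.2 fun a => eventually_separated ζ (y a)] with z hzx hzy
  have hupd : Function.update x i z ∘ σ = Fin.snoc (Fin.init (x ∘ σ)) z := by
    ext a
    refine Fin.lastCases ?_ (fun a => ?_) a
    · simp [σ]
    · have ha : σ a.castSucc ≠ i := fun h =>
        (Fin.castSucc_lt_last a).ne (by simpa [σ] using congrArg σ h)
      simp [Fin.init, ha]
  rw [← splitRatio_comp_left ζ _ y σ, hupd, ← splitRatio_snoc_eq_eval, Fin.snoc_init_self]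
  · exact fun a => hzx _
  · exact fun b => hy (Fin.castSucc_lt_last b).ne'
  · exact fun a b => hxy _ _
  · exact fun a => (hxy _ _).symm
  · exact fun b => hzy _
  · exact hzy _

theorem exists_eval_eq_hratio_update (ζ : ℂ) {k : ℕ} (w : Fin (2 * (k + 1)) → ℂ)
    (i : Fin (2 * (k + 1))) (hw : Generic ζ w) :
    ∃ T : Polynomial ℂ, T.natDegree ≤ k ∧
      ∀ᶠ z in Filter.cofinite, Hratio ζ (k + 1) (Function.update w i z) = T.eval z := by
  have hx : Generic ζ (firstHalf w) := fun a b hab => hw (by simpa [Fin.ext_iff] using hab)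
  have hy : Generic ζ (secondHalf w) := fun a b hab => hw (by simpa [Fin.ext_iff] using hab)
  have hxy : ∀ a b, Separated ζ (firstHalf w a) (secondHalf w b) := fun a b =>
    hw (by simp only [ne_eq, Fin.mk.injEq]; omega)
  by_cases hi : (i : ℕ) < k + 1
  · obtain ⟨T, hT, h⟩ := exists_eval_eq_splitRatio_update ζ _ _ ⟨i, hi⟩ hy hxy
    refine ⟨T, hT, h.mono fun z hz => ?_⟩
    rw [← hz]
    rw [hratio_eq_splitRatio]
    congr 1 <;> ext a
    · simp [firstHalf, Function.update_apply, Fin.ext_iff]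
    · have : k + 1 + (a : ℕ) ≠ i := by omega
      simp [secondHalf, Fin.ext_iff, this]
  · obtain ⟨T, hT, h⟩ := exists_eval_eq_splitRatio_update ζ _ _
      (⟨i - (k + 1), by omega⟩ : Fin (k + 1)) hx fun a b => (hxy b a).symm
    refine ⟨T, hT, h.mono fun z hz => ?_⟩
    rw [← hz, splitRatio_comm]
    rw [hratio_eq_splitRatio]
    congr 1 <;> ext a
    · have : (a : ℕ) ≠ i := by omega
      simp [firstHalf, Fin.ext_iff, this]
    · have : k + 1 + (a : ℕ) = i ↔ (a : ℕ) = i - (k + 1) := by omega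
      simp [secondHalf, Function.update_apply, Fin.ext_iff, this]

/-- The polynomial in `z` given by the determinant ratio at the tuple `(w, z, 0)`. -/
theorem exists_eval_eq_hratio_extL (ζ : ℂ) {k : ℕ} (w : Fin (2 * k) → ℂ) (h0 : ∀ a, w a ≠ 0)
    (hw : Generic ζ w) :
    ∃ T : Polynomial ℂ, T.natDegree ≤ k ∧ T.coeff k = (ζ ^ 2 - 1) ^ k * Hratio ζ k w ∧
      ∀ᶠ z in Filter.cofinite, Hratio ζ (k + 1) (extL w [z]) = T.eval z := by
  have hw0 : ∀ a, Separated ζ (w a) 0 := fun a => ⟨h0 a, by simp [hpol]⟩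
  cases k with
  | zero =>
    refine ⟨condensed ζ (firstHalf w) (secondHalf w) 0, natDegree_condensed_le _ _ _ _,
      coeff_condensed_zero _ _ _, ?_⟩
    filter_upwards [eventually_separated ζ 0] with z hz
    rw [← splitRatio_snoc_eq_eval ζ _ _ z 0 (fun i => i.elim0) (fun i => i.elim0)
      (fun i => i.elim0) (fun i => i.elim0) (fun i => i.elim0) hz]
    rw [hratio_eq_splitRatio]
    congr 1 <;> ext a <;> rw [show a = Fin.last 0 from Fin.ext (by simp)] <;>
      simp [firstHalf, secondHalf, extL, Fin.snoc]
  | succ m =>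
    let u : ℂ := w ⟨m + 1, by omega⟩
    let c : Fin m → ℂ := fun j => w ⟨m + 2 + j, by omega⟩
    have hc : secondHalf w = Fin.cons u c := by
      ext a
      refine Fin.cases ?_ (fun a => ?_) a
      · simp [secondHalf, u]
      · simp only [secondHalf, Fin.cons_succ, c, Fin.val_succ]
        congr 2
        omega
    have hcoeff : splitRatio ζ (firstHalf w) (Fin.snoc c u) = Hratio ζ (m + 1) w := by
      rw [Fin.snoc_eq_cons_rotate, ← hc, hratio_eq_splitRatio,
        ← splitRatio_comp_right ζ _ (secondHalf w) (finRotate (m + 1))]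
      rfl
    have hux : ∀ i, Separated ζ u (firstHalf w i) := fun i =>
      hw (by simp only [ne_eq, Fin.mk.injEq]; omega)
    have huc : ∀ j, Separated ζ u (c j) := fun i =>
      hw (by simp only [ne_eq, Fin.mk.injEq]; omega)
    have hxc : ∀ i j, Separated ζ (firstHalf w i) (c j) := fun i j =>
      hw (by simp only [ne_eq, Fin.mk.injEq]; omega)
    refine ⟨condensed ζ (firstHalf w) (Fin.snoc c u) 0, natDegree_condensed_le _ _ _ _,
      by rw [coeff_condensed_zero, hcoeff], ?_⟩
    filter_upwards [eventually_separated ζ 0,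
      Filter.eventually_all.2 fun a => eventually_separated ζ (w a)] with z hz hzw
    have hfirst : firstHalf (extL w [z]) = (Fin.snoc (firstHalf w) u : Fin (m + 2) → ℂ) := by
      ext a
      refine Fin.lastCases ?_ (fun a => ?_) a
      · have : m + 1 < 2 * (m + 1) := by omega
        simp [firstHalf, extL, u, this]
      · have : (a : ℕ) < 2 * (m + 1) := by omega
        simp [firstHalf, extL, this]
    have hsecond : secondHalf (extL w [z])
        = (Fin.snoc (Fin.snoc c z : Fin (m + 1) → ℂ) 0 : Fin (m + 2) → ℂ) := by
      ext a
      refine Fin.lastCases ?_ (fun a => ?_) a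
      · have h1 : ¬ m + 1 + 1 + (m + 1) < 2 * (m + 1) := by omega
        have h2 : m + 1 + 1 + (m + 1) - 2 * (m + 1) = 1 := by omega
        simp [secondHalf, extL, h1, h2]
      · refine Fin.lastCases ?_ (fun a => ?_) a
        · have h1 : ¬ m + 1 + 1 + m < 2 * (m + 1) := by omega
          have h2 : m + 1 + 1 + m - 2 * (m + 1) = 0 := by omega
          simp [secondHalf, extL, h1, h2]
        · have h1 : m + 1 + 1 + (a : ℕ) < 2 * (m + 1) := by omega
          simp [secondHalf, extL, c, h1]
    rw [hratio_eq_splitRatio]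
    rw [hfirst, hsecond, splitRatio_snoc_snoc_swap ζ (firstHalf w) c u z 0 hux (fun i => hzw _)
      (fun i => hw0 _) hxc huc (fun j => hzw _) (hzw _).symm (hw0 _) hz]
    refine splitRatio_snoc_eq_eval ζ _ _ z 0 (fun i => hzw _) ?_ (fun i => ?_)
      (fun i => (hw0 _).symm) ?_ hz <;> rw [Fin.forall_fin_succ'] <;>
      simp only [Fin.snoc_castSucc, Fin.snoc_last]
    · exact ⟨fun j => (hw0 _).symm, (hw0 _).symm⟩
    · exact ⟨hxc i, (hux i).symm⟩
    · exact ⟨fun j => hzw _, hzw _⟩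

theorem Generic.update {ζ : ℂ} {ι : Type*} [DecidableEq ι] {w : ι → ℂ} (hw : Generic ζ w) (i : ι)
    {z : ℂ} (hz : ∀ a, Separated ζ z (w a)) : Generic ζ (Function.update w i z) := by
  intro a b hab
  by_cases ha : a = i
  · subst ha
    simpa [Function.update_of_ne hab.symm] using hz b
  · by_cases hb : b = i
    · subst hb
      simpa [Function.update_of_ne ha] using (hz a).symm
    · simpa [Function.update_of_ne ha, Function.update_of_ne hb] using hw hab

theorem Generic.extL {ζ : ℂ} {k : ℕ} {w : Fin (2 * k) → ℂ} (hw : Generic ζ w)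
    (h0 : ∀ a, Separated ζ (w a) 0) {z : ℂ} (hz : ∀ a, Separated ζ z (w a))
    (hz0 : Separated ζ z 0) : Generic ζ (extL w [z] : Fin (2 * (k + 1)) → ℂ) := by
  have hlt : ∀ a b : Fin (2 * (k + 1)), a < b →
      Separated ζ (_root_.extL w [z] a) (_root_.extL w [z] b) := by
    intro a b hab
    rw [Fin.lt_def] at hab
    by_cases hb : (b : ℕ) < 2 * k
    · have ha : (a : ℕ) < 2 * k := by omega
      simp only [_root_.extL, ha, hb, dite_true]
      exact hw (by simp only [ne_eq, Fin.mk.injEq]; omega)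
    · by_cases ha : (a : ℕ) < 2 * k
      · obtain h | h : (b : ℕ) - 2 * k = 0 ∨ (b : ℕ) - 2 * k = 1 := by omega
        · simpa [_root_.extL, ha, hb, h] using (hz _).symm
        · simpa [_root_.extL, ha, hb, h] using h0 _
      · have h : (a : ℕ) - 2 * k = 0 := by omega
        have h' : (b : ℕ) - 2 * k = 1 := by omega
        simpa [_root_.extL, ha, hb, h, h'] using hz0
  intro a b hab
  rcases lt_or_gt_of_ne hab with h | h
  · exact hlt a b h
  · exact (hlt b a h).symm

theorem stmt2 (ζ : ℂ) (H : (k : ℕ) → (Fin (2*k) → ℂ) → ℂ) (hH : IsHFamily ζ H) (k : ℕ) :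
    (∀ (i : Fin (2*(k+1))) (w : Fin (2*(k+1)) → ℂ),
      ∃ P : Polynomial ℂ, P.natDegree ≤ k ∧
        ∀ z : ℂ, H (k+1) (Function.update w i z) = P.eval z) ∧
    (∀ w : Fin (2*k) → ℂ,
      ∃ P : Polynomial ℂ, P.natDegree ≤ k ∧
        (∀ z : ℂ, H (k+1) (extL w [z]) = P.eval z) ∧
        P.coeff k = (ζ^2 - 1)^k * H k w) := by
  obtain ⟨-, hpoly, hratio⟩ := hH
  obtain ⟨R, hR⟩ := hpoly (k + 1)
  obtain ⟨R', hR'⟩ := hpoly k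
  constructor
  · intro i w
    let S := MvPolynomial.aeval (fun j => if j = i then Polynomial.X
      else Polynomial.C (MvPolynomial.X j : MvPolynomial (Fin (2 * (k + 1))) ℂ)) R
    have hS : ∀ w z, (S.map (MvPolynomial.eval w)).eval z = H (k + 1) (Function.update w i z) := by
      intro w z
      rw [eval_map_aeval, hR]
      congr 2
      ext j
      by_cases hj : j = i <;> simp [hj]
    refine ⟨S.map (MvPolynomial.eval w), Polynomial.natDegree_map_le.trans ?_,
      fun z => (hS w z).symm⟩
    refine natDegree_le_of_generic ζ k S fun w _ hw => ?_
    obtain ⟨T, hT, hev⟩ := exists_eval_eq_hratio_update ζ w i hw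
    suffices S.map (MvPolynomial.eval w) = T from this ▸ hT
    refine Polynomial.eq_of_eventually_cofinite_eval_eq ?_
    filter_upwards [hev, Filter.eventually_all.2 fun a => eventually_separated ζ (w a)]
      with z hz hzw
    rw [hS, hratio _ _ (hw.update i hzw).hratioDefined, hz]
  · let S := MvPolynomial.aeval (fun j : Fin (2 * (k + 1)) =>
      if h : (j : ℕ) < 2 * k then
        Polynomial.C (MvPolynomial.X ⟨j, h⟩ : MvPolynomial (Fin (2 * k)) ℂ)
      else if (j : ℕ) = 2 * k then Polynomial.X else 0) R
    have hS : ∀ w z, (S.map (MvPolynomial.eval w)).eval z = H (k + 1) (extL w [z]) := by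
      intro w z
      rw [eval_map_aeval, hR]
      congr 2
      ext j
      by_cases hj : (j : ℕ) < 2 * k
      · simp [extL, hj]
      · by_cases hj' : (j : ℕ) = 2 * k
        · simp [extL, hj']
        · have h : (j : ℕ) - 2 * k = 1 := by omega
          simp [extL, hj, hj', h]
    have key : ∀ w, (∀ a, w a ≠ 0) → Generic ζ w →
        (S.map (MvPolynomial.eval w)).natDegree ≤ k ∧
          (S.map (MvPolynomial.eval w)).coeff k = (ζ ^ 2 - 1) ^ k * H k w := by
      intro w h0 hw
      obtain ⟨T, hT, hcoeff, hev⟩ := exists_eval_eq_hratio_extL ζ w h0 hw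
      have hST : S.map (MvPolynomial.eval w) = T := by
        refine Polynomial.eq_of_eventually_cofinite_eval_eq ?_
        filter_upwards [hev, eventually_separated ζ 0,
          Filter.eventually_all.2 fun a => eventually_separated ζ (w a)] with z hz hz0 hzw
        rw [hS, hratio _ _ (hw.extL (fun a => ⟨h0 a, by simp [hpol]⟩) hzw hz0).hratioDefined, hz]
      rw [hST, hratio k w hw.hratioDefined]
      exact ⟨hT, hcoeff⟩
    have hcoeff : S.coeff k = MvPolynomial.C ((ζ ^ 2 - 1) ^ k) * R' := by
      refine MvPolynomial.eq_of_eval_eq_of_generic ζ fun w h0 hw => ?_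
      rw [← Polynomial.coeff_map, (key w h0 hw).2, map_mul, MvPolynomial.eval_C, hR']
    refine fun w => ⟨S.map (MvPolynomial.eval w), Polynomial.natDegree_map_le.trans
      (natDegree_le_of_generic ζ k S fun w h0 hw => (key w h0 hw).1), fun z => (hS w z).symm, ?_⟩
    rw [Polynomial.coeff_map, hcoeff, map_mul, MvPolynomial.eval_C, hR']

end
end
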